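/- arXiv:0810.0935 — 9 statements merged into one kernel-verified Lean document; each statement's English description precedes it below -/
import Mathlib

section
/- There is no algorithm which takes as input two finite lists of elements of GL(4,ℤ) and decides whether the subgroups of GL(4,ℤ) generated by these lists are conjugate in GL(4,ℤ). Formally: the predicate on pairs (l₁, l₂) of lists of elements of GL(4,ℤ) asserting that there exists g ∈ GL(4,ℤ) with g⁻¹ · (Subgroup.closure of the set of entries of l₁) · g = Subgroup.closure of the set of entries of l₂ is not a computable predicate. -/
namespace GLPrimcodable

theorem encode_int_ofNat (n : ℕ) : Encodable.encode (Int.ofNat n) = 2 * n := rfl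
theorem encode_int_natCast (n : ℕ) : Encodable.encode ((n : ℤ)) = 2 * n := rfl
theorem encode_int_negSucc (n : ℕ) : Encodable.encode (Int.negSucc n) = 2 * n + 1 := rfl

theorem primrec_toNat : Primrec Int.toNat := by
  have hg : Primrec (fun c : ℕ => if c % 2 = 0 then c / 2 else 0) :=
    Primrec.ite
      (PrimrecRel.comp Primrec.eq (Primrec.nat_mod.comp .id (.const 2)) (.const 0))
      (Primrec.nat_div.comp .id (.const 2)) (.const 0)
  have h := hg.comp (Primrec.encode (α := ℤ))
  refine h.of_eq ?_
  rintro (n | n)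
  · rw [encode_int_ofNat]
    simp only [Int.ofNat_eq_natCast]
    split_ifs with h1 <;> omega
  · rw [encode_int_negSucc, Int.negSucc_eq]
    split_ifs with h1 <;> omega

theorem primrec_negToNat : Primrec (fun z : ℤ => (-z).toNat) := by
  have hg : Primrec (fun c : ℕ => if c % 2 = 1 then c / 2 + 1 else 0) :=
    Primrec.ite
      (PrimrecRel.comp Primrec.eq (Primrec.nat_mod.comp .id (.const 2)) (.const 1))
      (Primrec.succ.comp (Primrec.nat_div.comp .id (.const 2))) (.const 0)
  have h := hg.comp (Primrec.encode (α := ℤ))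
  refine h.of_eq ?_
  rintro (n | n)
  · rw [encode_int_ofNat]
    simp only [Int.ofNat_eq_natCast]
    split_ifs with h1 <;> omega
  · rw [encode_int_negSucc, Int.negSucc_eq]
    split_ifs with h1 <;> omega

theorem primrec_intSubNat : Primrec₂ (fun a b : ℕ => (a : ℤ) - b) := by
  have hg : Primrec (fun p : ℕ × ℕ =>
      Denumerable.ofNat ℤ (if p.2 ≤ p.1 then 2 * (p.1 - p.2) else 2 * (p.2 - p.1) - 1)) :=
    (Primrec.ofNat ℤ).comp <|
      Primrec.ite (PrimrecRel.comp Primrec.nat_le Primrec.snd Primrec.fst)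
        ((Primrec.nat_mul.comp (.const 2) (Primrec.nat_sub.comp .fst .snd)))
        (Primrec.nat_sub.comp (Primrec.nat_mul.comp (.const 2)
          (Primrec.nat_sub.comp .snd .fst)) (.const 1))
  refine Primrec₂.mk (hg.of_eq ?_)
  rintro ⟨a, b⟩
  by_cases h : b ≤ a
  · have h1 : ((a : ℤ) - b) = ((a - b : ℕ) : ℤ) := by omega
    rw [if_pos h, h1, show (2 * (a - b) = Encodable.encode (((a - b : ℕ) : ℤ))) from rfl,
      Denumerable.ofNat_encode]
  · have h1 : ((a : ℤ) - b) = Int.negSucc (b - a - 1) := by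
      rw [Int.negSucc_eq]; omega
    have h2 : 2 * (b - a) - 1 = Encodable.encode (Int.negSucc (b - a - 1)) := by
      rw [encode_int_negSucc]; omega
    rw [if_neg h, h1, h2, Denumerable.ofNat_encode]

theorem toNat_sub_neg_toNat (z : ℤ) : (z.toNat : ℤ) - (-z).toNat = z := by omega

theorem primrec_int_add : Primrec₂ ((· + ·) : ℤ → ℤ → ℤ) := by
  have h : Primrec (fun p : ℤ × ℤ =>
      ((p.1.toNat + p.2.toNat : ℕ) : ℤ) - ((-p.1).toNat + (-p.2).toNat : ℕ)) :=
    primrec_intSubNat.comp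
      (Primrec.nat_add.comp (primrec_toNat.comp .fst) (primrec_toNat.comp .snd))
      (Primrec.nat_add.comp (primrec_negToNat.comp .fst) (primrec_negToNat.comp .snd))
  refine Primrec₂.mk (h.of_eq ?_)
  rintro ⟨a, b⟩
  push_cast
  omega

theorem primrec_int_mul : Primrec₂ ((· * ·) : ℤ → ℤ → ℤ) := by
  have h : Primrec (fun p : ℤ × ℤ =>
      ((p.1.toNat * p.2.toNat + (-p.1).toNat * (-p.2).toNat : ℕ) : ℤ) -
        (p.1.toNat * (-p.2).toNat + (-p.1).toNat * p.2.toNat : ℕ)) :=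
    primrec_intSubNat.comp
      (Primrec.nat_add.comp
        (Primrec.nat_mul.comp (primrec_toNat.comp .fst) (primrec_toNat.comp .snd))
        (Primrec.nat_mul.comp (primrec_negToNat.comp .fst) (primrec_negToNat.comp .snd)))
      (Primrec.nat_add.comp
        (Primrec.nat_mul.comp (primrec_toNat.comp .fst) (primrec_negToNat.comp .snd))
        (Primrec.nat_mul.comp (primrec_negToNat.comp .fst) (primrec_toNat.comp .snd)))
  refine Primrec₂.mk (h.of_eq ?_)
  rintro ⟨a, b⟩
  have ha := toNat_sub_neg_toNat a
  have hb := toNat_sub_neg_toNat b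
  push_cast
  nlinarith [ha, hb]

end GLPrimcodable
section Infra2
open GLPrimcodable

namespace GLPrimcodable

abbrev F44 : Type := Fin 4 → Fin 4 → ℤ

instance matPrimcodable : Primcodable (Matrix (Fin 4) (Fin 4) ℤ) :=
  Primcodable.ofEquiv F44 Matrix.of.symm

/-- Matrix multiplication written out entrywise on `Fin 4 → Fin 4 → ℤ`. -/
def mulF (p : F44 × F44) : F44 := fun i j =>
  p.1 i 0 * p.2 0 j + (p.1 i 1 * p.2 1 j + (p.1 i 2 * p.2 2 j + p.1 i 3 * p.2 3 j))

theorem primrec_mulF : Primrec mulF := by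
  rw [Primrec.fin_curry]
  refine Primrec₂.mk ?_
  rw [Primrec.fin_curry]
  refine Primrec₂.mk ?_
  -- p : ((F44 × F44) × Fin 4) × Fin 4
  have hA : Primrec (fun p : ((F44 × F44) × Fin 4) × Fin 4 => p.1.1.1) :=
    Primrec.fst.comp (Primrec.fst.comp Primrec.fst)
  have hB : Primrec (fun p : ((F44 × F44) × Fin 4) × Fin 4 => p.1.1.2) :=
    Primrec.snd.comp (Primrec.fst.comp Primrec.fst)
  have hi : Primrec (fun p : ((F44 × F44) × Fin 4) × Fin 4 => p.1.2) :=
    Primrec.snd.comp Primrec.fst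
  have hj : Primrec (fun p : ((F44 × F44) × Fin 4) × Fin 4 => p.2) := Primrec.snd
  have hAik : ∀ k : Fin 4, Primrec (fun p : ((F44 × F44) × Fin 4) × Fin 4 => p.1.1.1 p.1.2 k) :=
    fun k => Primrec.fin_app.comp (Primrec.fin_app.comp hA hi) (Primrec.const k)
  have hBkj : ∀ k : Fin 4, Primrec (fun p : ((F44 × F44) × Fin 4) × Fin 4 => p.1.1.2 k p.2) :=
    fun k => Primrec.fin_app.comp (Primrec.fin_app.comp hB (Primrec.const k)) hj
  exact primrec_int_add.comp (primrec_int_mul.comp (hAik 0) (hBkj 0))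
    (primrec_int_add.comp (primrec_int_mul.comp (hAik 1) (hBkj 1))
      (primrec_int_add.comp (primrec_int_mul.comp (hAik 2) (hBkj 2))
        (primrec_int_mul.comp (hAik 3) (hBkj 3))))

theorem primrec_matMul :
    Primrec (fun p : Matrix (Fin 4) (Fin 4) ℤ × Matrix (Fin 4) (Fin 4) ℤ => p.1 * p.2) := by
  rw [← Primrec.of_equiv_iff (Matrix.of.symm : Matrix (Fin 4) (Fin 4) ℤ ≃ F44)]
  have h : Primrec (fun p : Matrix (Fin 4) (Fin 4) ℤ × Matrix (Fin 4) (Fin 4) ℤ =>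
      mulF (Matrix.of.symm p.1, Matrix.of.symm p.2)) :=
    primrec_mulF.comp (Primrec.pair (Primrec.of_equiv.comp Primrec.fst)
      (Primrec.of_equiv.comp Primrec.snd))
  refine h.of_eq ?_
  rintro ⟨A, B⟩
  funext i j
  show mulF (A, B) i j = (A * B) i j
  rw [Matrix.mul_apply, Fin.sum_univ_four, mulF]
  ring

theorem primrecPred_isUnitPair :
    PrimrecPred (fun p : Matrix (Fin 4) (Fin 4) ℤ × Matrix (Fin 4) (Fin 4) ℤ =>
      p.1 * p.2 = 1 ∧ p.2 * p.1 = 1) := by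
  have h1 : PrimrecPred (fun p : Matrix (Fin 4) (Fin 4) ℤ × Matrix (Fin 4) (Fin 4) ℤ =>
      p.1 * p.2 = 1) :=
    PrimrecRel.comp Primrec.eq primrec_matMul (Primrec.const 1)
  have h2 : PrimrecPred (fun p : Matrix (Fin 4) (Fin 4) ℤ × Matrix (Fin 4) (Fin 4) ℤ =>
      p.2 * p.1 = 1) :=
    PrimrecRel.comp Primrec.eq
      (primrec_matMul.comp (Primrec.pair Primrec.snd Primrec.fst)) (Primrec.const 1)
  exact h1.and h2

instance glPrimcodable : Primcodable (Matrix.GeneralLinearGroup (Fin 4) ℤ) :=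
  letI : Primcodable {p : Matrix (Fin 4) (Fin 4) ℤ × Matrix (Fin 4) (Fin 4) ℤ //
      p.1 * p.2 = 1 ∧ p.2 * p.1 = 1} := Primcodable.subtype primrecPred_isUnitPair
  Primcodable.ofEquiv _ (unitsEquivProdSubtype (Matrix (Fin 4) (Fin 4) ℤ))

end GLPrimcodable
end Infra2

/-!
The halting problem is reduced to conjugacy. A machine with several stacks is simulated by finitely
many partial affine maps of a lattice, so that it halts on a given input if and only if a lattice
point `v` depending on the input is equivalent, under these maps, to a fixed point `τ`. In a
suitable finitely presented group each lattice point `v` has a commutator `c v`, and `c a` and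
`c b` are conjugate whenever one of the affine maps sends `a` to `b`. Once the relator `c τ` is
added, `c v` is trivial if `v` is equivalent to `τ`; otherwise there is a group satisfying all the
relations in which `c v` is a central element of order two.

Embed the free group on the generators into `GL(2,ℤ)` by `f`, and let `H ≤ GL(2,ℤ) × GL(2,ℤ)` be
generated by the diagonal copy of the free group, the elements `(1, f k)` for the relators `k`, and
`(1, -f (c v))`. If `v` is equivalent to `τ`, then `(1, f (c v)) ∈ H` as in Mihailova's
construction, hence `s := (1, -1) ∈ H` and `H = ⟨H, s⟩`. Otherwise the group in which `c v` is a
central involution shows that `H` has no element of order two, and so `H` is not conjugate to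
`⟨H, s⟩`.
-/

namespace UndecidableConjugacy

open scoped commutatorElement

universe u

section Relation

variable {α : Type*} {r : α → α → Prop} {a b : α}

theorem eqvGen_iff_of_forall_rel {p : α → Prop} (hp : ∀ a b, r a b → (p a ↔ p b))
    (h : Relation.EqvGen r a b) : p a ↔ p b :=
  (congrArg (Quot.lift p fun a b hab => propext (hp a b hab)) (Quot.eqvGen_sound h)).to_iff

theorem eqvGen_iff_reflTransGen (hr : Relator.RightUnique r) (hb : ∀ c, ¬ r b c) :
    Relation.EqvGen r a b ↔ Relation.ReflTransGen r a b := by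
  refine ⟨fun h => (eqvGen_iff_of_forall_rel (p := (Relation.ReflTransGen r · b)) ?_ h).mpr .refl,
    Relation.EqvGen.reflTransGen_le_eqvGen r _ _⟩
  refine fun c d hcd => ⟨fun hcb => ?_, .head hcd⟩
  rcases hcb.cases_head with rfl | ⟨e, hce, heb⟩
  · exact absurd hcd (hb d)
  · exact hr hce hcd ▸ heb

end Relation

/-! ### Twisted HNN extensions -/

section Fibre

theorem exists_equiv_prod_fst_eq {R H W : Type u} [Infinite W] {h : R → H}
    (hsurj : Function.Surjective h) (hle : Cardinal.mk R ≤ Cardinal.mk W) :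
    ∃ e : R × W ≃ H × W, ∀ x, (e x).1 = h x.1 := by
  have fibre_equiv (y : H) : Nonempty ({r // h r = y} × W ≃ W) := by
    obtain ⟨r, hr⟩ := hsurj y
    rw [← Cardinal.eq, Cardinal.mk_prod, Cardinal.lift_id, Cardinal.lift_id]
    exact Cardinal.mul_eq_right (Cardinal.aleph0_le_mk W)
      ((Cardinal.mk_subtype_le _).trans hle) (Cardinal.mk_ne_zero_iff.mpr ⟨⟨r, hr⟩⟩)
  let e : R × W ≃ H × W :=
    calc R × W
      _ ≃ (Σ y, {r // h r = y}) × W := (Equiv.sigmaFiberEquiv h).symm.prodCongr (.refl W)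
      _ ≃ Σ y, {r // h r = y} × W := Equiv.sigmaProdDistrib _ _
      _ ≃ Σ _ : H, W := Equiv.sigmaCongrRight fun y => (fibre_equiv y).some
      _ ≃ H × W := Equiv.sigmaEquivProd H W
  exact ⟨e, fun _ => rfl⟩

theorem exists_representative {X : Type*} (s : Setoid X) (A : Set X) :
    ∃ ρ : X → X, (∀ x y, s x y → ρ x = ρ y) ∧ (∀ x, s x (ρ x)) ∧ ∀ x ∈ A, ρ x ∈ A := by
  have exists_mem (c : Quotient s) : ∃ y, ⟦y⟧ = c ∧ ∀ x ∈ A, ⟦x⟧ = c → y ∈ A := by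
    by_cases h : ∃ x ∈ A, ⟦x⟧ = c
    · exact h.imp fun x hx => ⟨hx.2, fun _ _ _ => hx.1⟩
    · exact (Quotient.exists_rep c).imp fun y hy => ⟨hy, fun x hx hxc => absurd ⟨x, hx, hxc⟩ h⟩
  choose ρ hρ hρA using exists_mem
  exact ⟨fun x => ρ ⟦x⟧, fun x y hxy => congrArg ρ (Quotient.sound hxy),
    fun x => Quotient.exact (hρ ⟦x⟧).symm, fun x hx => hρA _ x hx rfl⟩

end Fibre

section TwistedFunctions

variable {G Z M : Type u} [Group G] [CommGroup Z] [Group M]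

/-- The functions on `G` that are equivariant for a partial homomorphism from `G` to `Z`, which is
given by its graph `Θ`. -/
def twistedFunctions (Θ : Subgroup (G × Z)) : Set (G → Z) :=
  {κ | ∀ p ∈ Θ, ∀ g, κ (p.1 * g) = p.2 * κ g}

variable {Θ : Subgroup (G × Z)}

theorem exists_mem_twistedFunctions_eqOn (hΘ : ∀ z, (1, z) ∈ Θ → z = 1) {A : Set G} {f : G → Z}
    (hf : ∀ p ∈ Θ, ∀ g ∈ A, p.1 * g ∈ A → f (p.1 * g) = p.2 * f g) :
    ∃ κ ∈ twistedFunctions Θ, Set.EqOn κ f A := by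
  obtain ⟨ρ, ρ_eq, ρ_rel, ρ_mem⟩ :=
    exists_representative (QuotientGroup.rightRel (Θ.map (MonoidHom.fst G Z))) A
  have exists_shift (g : G) : ∃ p ∈ Θ, p.1 * ρ g = g := by
    obtain ⟨p, hp, hpg⟩ := QuotientGroup.rightRel_apply.mp (ρ_rel g)
    exact ⟨p⁻¹, inv_mem hp, by simp [show p.1 = ρ g * g⁻¹ from hpg]⟩
  choose p hp hpρ using exists_shift
  refine ⟨fun g => (p g).2 * f (ρ g), fun s hs g => ?_, fun g hg => ?_⟩
  · have hρ : ρ g = ρ (s.1 * g) := ρ_eq _ _ <|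
      QuotientGroup.rightRel_apply.mpr ⟨s, hs, by simp⟩
    have h_one : ((p (s.1 * g))⁻¹ * (s * p g)).1 = 1 := by
      have h := hpρ (s.1 * g)
      rw [← hρ, ← eq_mul_inv_iff_mul_eq] at h
      simp [h, ← eq_mul_inv_iff_mul_eq.mpr (hpρ g), mul_assoc]
    have h_snd : ((p (s.1 * g))⁻¹ * (s * p g)).2 = 1 :=
      hΘ _ (h_one ▸ mul_mem (inv_mem (hp _)) (mul_mem hs (hp g)))
    rw [Prod.snd_mul, Prod.snd_inv, Prod.snd_mul, inv_mul_eq_one] at h_snd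
    change (p (s.1 * g)).2 * f (ρ (s.1 * g)) = s.2 * ((p g).2 * f (ρ g))
    rw [← hρ, h_snd, mul_assoc]
  · have h := hf _ (hp g) _ (ρ_mem g hg) ((hpρ g).symm ▸ hg)
    rw [hpρ] at h
    exact h.symm

theorem exists_mem_twistedFunctions_comp_eq (hΘ : ∀ z, (1, z) ∈ Θ → z = 1) {α : M →* G}
    (hα : Function.Injective α) {κ : M → Z}
    (hκ : κ ∈ twistedFunctions (Θ.comap (α.prodMap (.id Z)))) :
    ∃ κ' ∈ twistedFunctions Θ, κ' ∘ α = κ := by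
  obtain ⟨κ', hκ', heq⟩ := exists_mem_twistedFunctions_eqOn hΘ (A := Set.range α)
    (f := Function.extend α κ 1) <| by
      rintro ⟨_, z⟩ hp _ ⟨m, rfl⟩ ⟨n, hn⟩
      obtain rfl := eq_mul_inv_of_mul_eq hn.symm
      rw [← hn, hα.extend_apply, hα.extend_apply, ← hκ (n * m⁻¹, z) (by simpa using hp) m,
        inv_mul_cancel_right]
  exact ⟨κ', hκ', funext fun m => (heq ⟨m, rfl⟩).trans (hα.extend_apply ..)⟩

theorem exists_twistedFunctions_equiv (hΘ : ∀ z, (1, z) ∈ Θ → z = 1) {α : M →* G}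
    (hα : Function.Injective α) {W : Type u} [Infinite W]
    (hW : Cardinal.mk (G × (G → Z)) ≤ Cardinal.mk W) :
    ∃ e : G × twistedFunctions Θ × W ≃
        M × twistedFunctions (Θ.comap (α.prodMap (.id Z))) × W,
      (∀ x, (e x).2.1.1 (e x).1 = x.2.1.1 x.1) ∧
      ∀ m x, e (α m * x.1, x.2) = (m * (e x).1, (e x).2) := by
  obtain ⟨T, hT, one_mem⟩ := α.range.exists_isComplement_right 1
  let restrict (s : T × twistedFunctions Θ) : twistedFunctions (Θ.comap (α.prodMap (.id Z))) :=
    ⟨fun m => s.2.1 (α m * s.1.1), fun p hp m => by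
      simpa only [map_mul, mul_assoc] using s.2.2 (α p.1, p.2) hp (α m * s.1.1)⟩
  have restrict_surjective : Function.Surjective restrict := by
    rintro ⟨κ, hκ⟩
    obtain ⟨κ', hκ', rfl⟩ := exists_mem_twistedFunctions_comp_eq hΘ hα hκ
    exact ⟨(⟨1, one_mem⟩, ⟨κ', hκ'⟩), by simp [restrict, Function.comp_def]⟩
  have mk_le : Cardinal.mk (T × twistedFunctions Θ) ≤ Cardinal.mk W :=
    (Cardinal.mk_le_of_injective (f := Prod.map Subtype.val Subtype.val)
      (Subtype.val_injective.prodMap Subtype.val_injective)).trans hW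
  obtain ⟨e₀, he₀⟩ := exists_equiv_prod_fst_eq restrict_surjective mk_le
  let ofRange := MonoidHom.ofInjective hα
  let e : G × twistedFunctions Θ × W ≃
      M × twistedFunctions (Θ.comap (α.prodMap (.id Z))) × W :=
    calc G × twistedFunctions Θ × W
      _ ≃ (α.range × T) × twistedFunctions Θ × W := hT.equiv.prodCongr (.refl _)
      _ ≃ α.range × T × twistedFunctions Θ × W := Equiv.prodAssoc ..
      _ ≃ α.range × (T × twistedFunctions Θ) × W :=
        (Equiv.refl _).prodCongr (Equiv.prodAssoc ..).symm
      _ ≃ M × twistedFunctions (Θ.comap (α.prodMap (.id Z))) × W :=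
        ofRange.symm.toEquiv.prodCongr e₀
  have e_apply (g κ w) : e (g, κ, w) =
      (ofRange.symm (hT.equiv g).1, e₀ (((hT.equiv g).2, κ), w)) := rfl
  have apply_ofRange_symm (y) : α (ofRange.symm y) = y :=
    congrArg Subtype.val (ofRange.apply_symm_apply y)
  refine ⟨e, fun ⟨g, κ, w⟩ => ?_, fun m ⟨g, κ, w⟩ => ?_⟩
  · rw [e_apply, he₀]
    change κ.1 (α (ofRange.symm (hT.equiv g).1) * (hT.equiv g).2) = κ.1 g
    rw [apply_ofRange_symm, hT.equiv_fst_mul_equiv_snd]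
  · have h := hT.equiv_mul_left (ofRange m) g
    rw [show ((ofRange m : α.range) : G) = α m from rfl] at h
    rw [e_apply, e_apply, h, map_mul, ofRange.symm_apply_apply]

end TwistedFunctions

section TwistedHNN

theorem commute_inl_inr {N G : Type*} [Group N] [Group G] {φ : G →* MulAut N} {n : N} {g : G}
    (h : φ g n = n) : Commute (.inl n : N ⋊[φ] G) (.inr g) := by
  have h_aut := SemidirectProduct.inl_aut (φ := φ) g n
  rw [h, map_inv, eq_mul_inv_iff_mul_eq] at h_aut
  exact h_aut

/-- The action of `G` on `G × X` by left translation of the first factor. -/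
def leftTranslation (G X : Type*) [Group G] : G →* Equiv.Perm (G × X) where
  toFun g := (Equiv.mulLeft g).prodCongr (.refl X)
  map_one' := by ext <;> simp
  map_mul' g h := by ext <;> simp [mul_assoc]

variable {G Z M I : Type u} [Group G] [CommGroup Z] [Group M]

theorem exists_perm_twistedFunctions {Θ : Subgroup (G × Z)} (hΘ : ∀ z, (1, z) ∈ Θ → z = 1)
    {α β : M →* G} (hα : Function.Injective α) (hβ : Function.Injective β)
    (hαβ : Θ.comap (α.prodMap (.id Z)) = Θ.comap (β.prodMap (.id Z))) {W : Type u} [Infinite W]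
    (hW : Cardinal.mk (G × (G → Z)) ≤ Cardinal.mk W) :
    ∃ ρ : Equiv.Perm (G × twistedFunctions Θ × W),
      (∀ x, (ρ x).2.1.1 (ρ x).1 = x.2.1.1 x.1) ∧
      ∀ m, ρ * leftTranslation G _ (α m) = leftTranslation G _ (β m) * ρ := by
  obtain ⟨e, e_color, e_mul⟩ := exists_twistedFunctions_equiv hΘ hα hW
  obtain ⟨e', e'_color, e'_mul⟩ := hαβ.symm ▸ exists_twistedFunctions_equiv hΘ hβ hW
  refine ⟨e.trans e'.symm, fun x => ?_, fun m => Equiv.ext fun x => e'.injective ?_⟩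
  · rw [← e_color x, ← e'_color, Equiv.trans_apply, e'.apply_symm_apply]
  · calc e' (e'.symm (e (α m * x.1, x.2)))
      _ = (m * (e x).1, (e x).2) := by rw [e'.apply_symm_apply, e_mul]
      _ = e' (β m * (e'.symm (e x)).1, (e'.symm (e x)).2) := by rw [e'_mul, e'.apply_symm_apply]

/-- The group is the wreath product of `Z` with the permutations of `G × twistedFunctions Θ × W`.
In it `q` is the function `(g, κ, w) ↦ κ g`: equivariance of `κ` makes `⁅q, ι p.1⁆` the constant
`p.2`, and the auxiliary factor `W` makes room for permutations `r i` preserving `q`. -/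
theorem exists_twistedHNN {Θ : Subgroup (G × Z)} (hΘ : ∀ z, (1, z) ∈ Θ → z = 1)
    {α β : I → M →* G} (hα : ∀ i, Function.Injective (α i)) (hβ : ∀ i, Function.Injective (β i))
    (hαβ : ∀ i, Θ.comap ((α i).prodMap (.id Z)) = Θ.comap ((β i).prodMap (.id Z))) :
    ∃ (P : Type u) (_ : Group P) (ι : G →* P) (ζ : Z →* P) (q : P) (r : I → P),
      Function.Injective ζ ∧ (∀ z p, Commute (ζ z) p) ∧
      (∀ i m, r i * ι (α i m) = ι (β i m) * r i) ∧ (∀ i, Commute q (r i)) ∧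
      ∀ p ∈ Θ, ⁅q, ι p.1⁆ = ζ p.2 := by
  let W := (G × (G → Z)) × ℕ
  have hW : Cardinal.mk (G × (G → Z)) ≤ Cardinal.mk W :=
    Cardinal.mk_le_of_injective (f := (·, 0)) fun _ _ h => congrArg Prod.fst h
  let Ω := G × twistedFunctions Θ × W
  obtain ⟨κ₁, hκ₁, -⟩ := exists_mem_twistedFunctions_eqOn hΘ (A := ∅) (f := 1) (by simp)
  have nonempty_Ω : Nonempty Ω := ⟨1, ⟨κ₁, hκ₁⟩, (1, 1), 0⟩
  choose ρ ρ_color ρ_mul using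
    fun i => exists_perm_twistedFunctions hΘ (hα i) (hβ i) (hαβ i) hW
  let τ : G →* Equiv.Perm Ω := leftTranslation G (twistedFunctions Θ × W)
  let color (x : Ω) : Z := x.2.1.1 x.1
  have color_translate {p : G × Z} (hp : p ∈ Θ) (x : Ω) :
      color x = p.2 * color (τ p.1⁻¹ x) := by
    have h := x.2.1.2 p hp (p.1⁻¹ * x.1)
    rwa [mul_inv_cancel_left] at h
  let P := (Ω → Z) ⋊[mulAutArrow] Equiv.Perm Ω
  let ι : G →* P := SemidirectProduct.inr.comp τ
  let ζ : Z →* P := SemidirectProduct.inl.comp (Pi.constMonoidHom Ω Z)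
  refine ⟨P, inferInstance, ι, ζ, .inl color, fun i => .inr (ρ i),
    SemidirectProduct.inl_injective.comp Function.const_injective, fun z p => ?_, fun i m => ?_,
    fun i => ?_, fun p hp => ?_⟩
  · rw [← p.inl_left_mul_inr_right]
    exact ((Commute.all _ _).map SemidirectProduct.inl).mul_right (commute_inl_inr rfl)
  · exact (map_mul ..).symm.trans ((congrArg _ (ρ_mul i m)).trans (map_mul ..))
  · refine commute_inl_inr (funext fun x => ?_)
    have h := ρ_color i ((ρ i).symm x)
    rw [(ρ i).apply_symm_apply] at h
    exact h.symm
  · have h : ⁅(.inl color : P), ι p.1⁆ =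
        .inl (color * (mulAutArrow (τ p.1) color)⁻¹) := by
      rw [map_mul, map_inv, SemidirectProduct.inl_aut, commutatorElement_def, map_inv]
      simp only [ι, MonoidHom.comp_apply, mul_inv_rev, inv_inv, mul_assoc]
    rw [h]
    refine congrArg SemidirectProduct.inl (funext fun x => mul_inv_eq_of_eq_mul ?_)
    rw [color_translate hp x, map_inv]
    rfl

end TwistedHNN

section FreeModel

/-- The action of `Γ` on the free group over its own elements, by left translation of the
generators. -/
def translateGenerators (Γ : Type*) [Group Γ] : Γ →* MulAut (FreeGroup Γ) where
  toFun v := FreeGroup.freeGroupCongr (Equiv.mulLeft v)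
  map_one' := by rw [Equiv.mulLeft_one]; exact FreeGroup.freeGroupCongr_refl
  map_mul' v w := by rw [Equiv.mulLeft_mul]; exact (FreeGroup.freeGroupCongr_trans ..).symm

variable {Γ Λ Z I : Type u} [Group Γ] [Group Λ] [CommGroup Z]

/-- The homomorphism `FreeGroup Λ ⋊ Λ →* FreeGroup Γ ⋊ Γ` that is `α` on `Λ` and sends the
generator `1` of `FreeGroup Λ` to the generator `a` of `FreeGroup Γ`. -/
def translateHom (α : Λ →* Γ) (a : Γ) :
    FreeGroup Λ ⋊[translateGenerators Λ] Λ →* FreeGroup Γ ⋊[translateGenerators Γ] Γ :=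
  SemidirectProduct.map (FreeGroup.map fun v => α v * a) α fun v => by
    ext w
    simp [translateGenerators, mul_assoc]

theorem translateHom_inl (α : Λ →* Γ) (a : Γ) (f : FreeGroup Λ) :
    translateHom α a (.inl f) = .inl (FreeGroup.map (fun v => α v * a) f) :=
  SemidirectProduct.map_inl ..

theorem translateHom_injective {α : Λ →* Γ} (hα : Function.Injective α) (a : Γ) :
    Function.Injective (translateHom α a) := fun _ _ h =>
  SemidirectProduct.ext
    (FreeGroup.map_injective ((mul_left_injective a).comp hα) (congrArg SemidirectProduct.left h))
    (hα (congrArg SemidirectProduct.right h))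

/-- The graph, on `FreeGroup Γ ⋊ Γ`, of the homomorphism `FreeGroup Γ →* Z` extending `c`. -/
def liftGraph (c : Γ → Z) : Subgroup ((FreeGroup Γ ⋊[translateGenerators Γ] Γ) × Z) :=
  (SemidirectProduct.inl.prod (FreeGroup.lift c)).range

theorem inl_of_mem_liftGraph (c : Γ → Z) (e : Γ) : (.inl (.of e), c e) ∈ liftGraph c :=
  ⟨.of e, by simp⟩

theorem eq_one_of_mem_liftGraph {c : Γ → Z} {z : Z} (hz : (1, z) ∈ liftGraph c) : z = 1 := by
  obtain ⟨f, hf⟩ := hz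
  obtain ⟨h_inl, rfl⟩ := Prod.ext_iff.mp hf
  obtain rfl : f = 1 := SemidirectProduct.inl_injective (h_inl.trans (map_one _).symm)
  exact map_one _

theorem comap_translateHom_liftGraph {α : Λ →* Γ} (hα : Function.Injective α) (a : Γ) (c : Γ → Z) :
    (liftGraph c).comap ((translateHom α a).prodMap (.id Z)) =
      liftGraph fun v => c (α v * a) := by
  have lift_map (f : FreeGroup Λ) :
      FreeGroup.lift c (FreeGroup.map (fun v => α v * a) f) =
        FreeGroup.lift (fun v => c (α v * a)) f := by
    exact DFunLike.congr_fun (f := (FreeGroup.lift c).comp (FreeGroup.map _)) (by ext; simp) f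
  ext ⟨x, z⟩
  constructor
  · rintro ⟨f, hf⟩
    obtain ⟨h_inl, rfl⟩ := Prod.ext_iff.mp hf
    obtain rfl : f = FreeGroup.map (fun v => α v * a) x.left :=
      congrArg SemidirectProduct.left h_inl
    have h_right : x.right = 1 := hα <|
      (congrArg SemidirectProduct.right h_inl).symm.trans (map_one α).symm
    exact ⟨x.left, Prod.ext (SemidirectProduct.ext rfl h_right.symm) (lift_map _).symm⟩
  · rintro ⟨f, hf⟩
    obtain ⟨rfl, rfl⟩ := Prod.ext_iff.mp hf
    exact ⟨FreeGroup.map (fun v => α v * a) f, Prod.ext (translateHom_inl α a f).symm (lift_map f)⟩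

theorem exists_group_commutator_conj_eq {α β : I → Λ →* Γ} (hα : ∀ i, Function.Injective (α i))
    (hβ : ∀ i, Function.Injective (β i)) {a b : I → Γ} {c : Γ → Z}
    (hc : ∀ i v, c (α i v * a i) = c (β i v * b i)) :
    ∃ (P : Type u) (_ : Group P) (X : Γ →* P) (t q : P) (r : I → P) (ζ : Z →* P),
      Function.Injective ζ ∧ (∀ z p, Commute (ζ z) p) ∧
      (∀ i v, r i * X (α i v) = X (β i v) * r i) ∧
      (∀ i, r i * (X (a i) * t * (X (a i))⁻¹) = X (b i) * t * (X (b i))⁻¹ * r i) ∧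
      (∀ i, Commute q (r i)) ∧ ∀ e, ⁅q, X e * t * (X e)⁻¹⁆ = ζ (c e) := by
  obtain ⟨P, _, ι, ζ, q, r, hζ, hζ_comm, hr, hqr, hq⟩ :=
    exists_twistedHNN (Θ := liftGraph c) (fun _ => eq_one_of_mem_liftGraph)
      (fun i => translateHom_injective (hα i) (a i)) (fun i => translateHom_injective (hβ i) (b i))
      fun i => by
        rw [comap_translateHom_liftGraph (hα i), comap_translateHom_liftGraph (hβ i),
          funext (hc i)]
  have conj_eq (e : Γ) :
      ι (.inr e) * ι (.inl (.of 1)) * (ι (.inr e))⁻¹ = ι (.inl (.of e)) := by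
    rw [← map_inv, ← map_mul, ← map_mul, ← map_inv, ← SemidirectProduct.inl_aut]
    simp [translateGenerators]
  refine ⟨P, _, ι.comp SemidirectProduct.inr, ι (.inl (.of 1)), q, r, ζ, hζ, hζ_comm,
    fun i v => ?_, fun i => ?_, hqr, fun e => ?_⟩
  · simpa [translateHom] using hr i (.inr v)
  · simpa [translateHom_inl, conj_eq] using hr i (.inl (.of 1))
  · rw [MonoidHom.comp_apply, conj_eq]
    exact hq _ (inl_of_mem_liftGraph c e)

end FreeModel

/-! ### The group of a system of affine maps -/

section Monomial

variable {J G H : Type*} [Fintype J] [Group G] [Group H]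

/-- The product of the powers `x j ^ v j`, taken in a fixed order of `J`: a monomial in the letters
`x` when these are not assumed to commute. -/
noncomputable def monomial (x : J → G) (v : J → ℤ) : G :=
  (Finset.univ.toList.map fun j => x j ^ v j).prod

theorem map_monomial (φ : G →* H) (x : J → G) (v : J → ℤ) :
    φ (monomial x v) = monomial (fun j => φ (x j)) v := by
  simp [monomial, map_list_prod, Function.comp_def]

theorem monomial_add {x : J → G} (hx : ∀ i j, Commute (x i) (x j)) (v w : J → ℤ) :
    monomial x (v + w) = monomial x v * monomial x w := by
  unfold monomial
  induction (Finset.univ : Finset J).toList with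
  | nil => simp
  | cons j l ih =>
    have commute_prod : Commute (x j ^ w j) (l.map fun i => x i ^ v i).prod :=
      Commute.list_prod_right _ _ fun y hy => by
        obtain ⟨i, -, rfl⟩ := List.mem_map.mp hy
        exact (hx j i).zpow_zpow _ _
    rw [List.map_cons, List.prod_cons, ih, Pi.add_apply, zpow_add]
    simp only [List.map_cons, List.prod_cons, mul_assoc, commute_prod.left_comm]

theorem monomial_single [DecidableEq J] (X : Multiplicative (J → ℤ) →* G) (v : J → ℤ) :
    monomial (fun j => X (.ofAdd (Pi.single j 1))) v = X (.ofAdd v) := by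
  rw [← map_monomial, monomial, Finset.prod_map_toList]
  congr 1
  refine Multiplicative.toAdd.injective ?_
  conv_rhs => rw [toAdd_ofAdd, ← Finset.univ_sum_single v]
  simp only [toAdd_prod, toAdd_zpow, toAdd_ofAdd, ← Pi.single_smul, smul_eq_mul, mul_one]

end Monomial

section CollatzSystem

/-- A family of partial affine maps `offset i + scale i * u ↦ offset' i + scale' i * u` of
the lattice `J → ℤ`, indexed by `R`: a multidimensional generalised Collatz map. -/
structure CollatzSystem (R J : Type*) where
  offset : R → J → ℤ
  scale : R → J → ℤ
  offset' : R → J → ℤ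
  scale' : R → J → ℤ
  scale_ne_zero : ∀ i j, scale i j ≠ 0
  scale'_ne_zero : ∀ i j, scale' i j ≠ 0

/-- The letters of the presentation attached to a `CollatzSystem`: the `x j` generate the lattice,
the conjugates of `t` stand for its points, `r i` realises the `i`-th affine map on those
conjugates, and `q` commutes with the `r i`. -/
inductive Generator (R J : Type*)
  | x (j : J)
  | t
  | q
  | r (i : R)
  deriving Fintype

variable {R J G H : Type*} [Group G] [Group H]

/-- One application of one of the affine maps. -/
def CollatzSystem.Step (V : CollatzSystem R J) (a b : J → ℤ) : Prop :=
  ∃ i u, a = V.scale i * u + V.offset i ∧ b = V.scale' i * u + V.offset' i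

/-- Multiplication by `s`, coordinate by coordinate, on the lattice `J → ℤ` written
multiplicatively. -/
def scaleHom (s : J → ℤ) : Multiplicative (J → ℤ) →* Multiplicative (J → ℤ) :=
  (AddMonoidHom.mulLeft s).toMultiplicative

theorem scaleHom_injective {s : J → ℤ} (hs : ∀ j, s j ≠ 0) : Function.Injective (scaleHom s) :=
  fun _ _ h => funext fun j => mul_left_cancel₀ (hs j) (congrFun h j)

theorem scaleHom_single [DecidableEq J] (s : J → ℤ) (j : J) :
    scaleHom s (.ofAdd (Pi.single j 1)) = .ofAdd (Pi.single j 1) ^ s j := by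
  refine Multiplicative.toAdd.injective (funext fun k => ?_)
  obtain rfl | hk := eq_or_ne k j <;> simp [scaleHom, *]

/-- The choice of values for the letters in which the `x j` generate the image of the lattice
under `X`. -/
def valuation [DecidableEq J] (X : Multiplicative (J → ℤ) →* G) (t q : G) (r : R → G) :
    Generator R J → G
  | .x j => X (.ofAdd (Pi.single j 1))
  | .t => t
  | .q => q
  | .r i => r i

variable [Fintype J]

/-- The conjugate of `t` that stands for the lattice point `v`. -/
noncomputable def pointConjugate (g : Generator R J → G) (v : J → ℤ) : G :=
  MulAut.conj (monomial (fun j => g (.x j)) v) (g .t)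

theorem map_pointConjugate (φ : G →* H) (g : Generator R J → G) (v : J → ℤ) :
    φ (pointConjugate g v) = pointConjugate (φ ∘ g) v := by
  rw [pointConjugate, MulAut.conj_apply, map_mul, map_mul, map_inv, map_monomial]; rfl

/-- The commutator that is trivial, in the group presented by a `CollatzSystem`, for a set of
lattice points `v` closed under the steps of the system. -/
noncomputable def pointCommutator (g : Generator R J → G) (v : J → ℤ) : G :=
  ⁅g .q, pointConjugate g v⁆

theorem map_pointCommutator (φ : G →* H) (g : Generator R J → G) (v : J → ℤ) :
    φ (pointCommutator g v) = pointCommutator (φ ∘ g) v := by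
  simp [pointCommutator, map_commutatorElement, map_pointConjugate]

namespace CollatzSystem

variable (V : CollatzSystem R J)

/-- The defining relations of the group attached to a `CollatzSystem`, as a property of a choice of
values for the letters. -/
structure Satisfies (g : Generator R J → G) : Prop where
  commute_x : ∀ j k, Commute (g (.x j)) (g (.x k))
  conj_x : ∀ i j, MulAut.conj (g (.r i)) (g (.x j) ^ V.scale i j) = g (.x j) ^ V.scale' i j
  conj_pointConjugate : ∀ i,
    MulAut.conj (g (.r i)) (pointConjugate g (V.offset i)) = pointConjugate g (V.offset' i)
  commute_q_r : ∀ i, Commute (g .q) (g (.r i))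

/-- The defining relators of the group attached to a `CollatzSystem`, as words in the letters. -/
def relators : Set (FreeGroup (Generator R J)) :=
  (Set.range fun p : J × J => ⁅FreeGroup.of (.x p.1 : Generator R J), FreeGroup.of (.x p.2)⁆) ∪
  (Set.range fun p : R × J =>
    MulAut.conj (FreeGroup.of (.r p.1)) (.of (.x p.2) ^ V.scale p.1 p.2) *
      (.of (.x p.2) ^ V.scale' p.1 p.2)⁻¹) ∪
  (Set.range fun i => MulAut.conj (FreeGroup.of (.r i)) (pointConjugate .of (V.offset i)) *
      (pointConjugate .of (V.offset' i))⁻¹) ∪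
  Set.range fun i => ⁅FreeGroup.of (.q : Generator R J), FreeGroup.of (.r i)⁆

theorem finite_relators [Finite R] : V.relators.Finite :=
  (((Set.finite_range _).union (Set.finite_range _)).union (Set.finite_range _)).union
    (Set.finite_range _)

theorem satisfies_iff_forall_relators (φ : FreeGroup (Generator R J) →* G) :
    V.Satisfies (φ ∘ FreeGroup.of) ↔ ∀ w ∈ V.relators, φ w = 1 := by
  simp only [relators, Set.mem_union, or_imp, forall_and, Set.forall_mem_range, Prod.forall,
    map_commutatorElement, commutatorElement_eq_one_iff_commute, map_mul, map_inv,
    mul_inv_eq_one, map_pointConjugate, map_zpow, MulAut.conj_apply]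
  constructor
  · rintro ⟨h₁, h₂, h₃, h₄⟩
    simp_all
  · rintro ⟨⟨⟨h₁, h₂⟩, h₃⟩, h₄⟩
    exact ⟨h₁, by simpa using h₂, by simpa using h₃, h₄⟩

variable {V} {g : Generator R J → G}

theorem Satisfies.conj_monomial (hg : V.Satisfies g) (i : R) (u : J → ℤ) :
    MulAut.conj (g (.r i)) (monomial (fun j => g (.x j)) (V.scale i * u)) =
      monomial (fun j => g (.x j)) (V.scale' i * u) := by
  rw [← MulEquiv.coe_toMonoidHom, map_monomial]
  simp only [monomial, MulEquiv.coe_toMonoidHom, Pi.mul_apply, ← map_zpow, zpow_mul, hg.conj_x]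

theorem pointConjugate_add (hx : ∀ j k, Commute (g (.x j)) (g (.x k))) (v w : J → ℤ) :
    pointConjugate g (v + w) =
      MulAut.conj (monomial (fun j => g (.x j)) v) (pointConjugate g w) := by
  rw [pointConjugate, monomial_add hx, map_mul, MulAut.mul_apply, pointConjugate]

theorem Satisfies.conj_pointConjugate_of_step (hg : V.Satisfies g) (i : R) (u : J → ℤ) :
    MulAut.conj (g (.r i)) (pointConjugate g (V.scale i * u + V.offset i)) =
      pointConjugate g (V.scale' i * u + V.offset' i) := by
  simp only [pointConjugate_add hg.commute_x, ← hg.conj_monomial i u, ← hg.conj_pointConjugate i]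
  simp [MulAut.conj_apply, mul_assoc]

theorem Satisfies.pointCommutator_eq_one_iff_of_step (hg : V.Satisfies g) {a b : J → ℤ}
    (h : V.Step a b) : pointCommutator g a = 1 ↔ pointCommutator g b = 1 := by
  obtain ⟨i, u, rfl, rfl⟩ := h
  have conj_q : MulAut.conj (g (.r i)) (g .q) = g .q := by
    rw [MulAut.conj_apply, (hg.commute_q_r i).symm.mul_inv_cancel]
  rw [← (MulAut.conj (g (.r i))).map_eq_one_iff, pointCommutator, map_commutatorElement, conj_q,
    hg.conj_pointConjugate_of_step, pointCommutator]

theorem pointCommutator_mem_normalClosure {v τ : J → ℤ} (h : Relation.EqvGen V.Step v τ) :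
    pointCommutator .of v ∈ Subgroup.normalClosure (insert (pointCommutator .of τ) V.relators) := by
  set rels := insert (pointCommutator .of τ) V.relators
  have satisfies : V.Satisfies (PresentedGroup.mk rels ∘ FreeGroup.of) :=
    (V.satisfies_iff_forall_relators _).mpr fun _ hw =>
      PresentedGroup.one_of_mem (Set.mem_insert_of_mem _ hw)
  have commutator_iff := eqvGen_iff_of_forall_rel
    (fun _ _ step => satisfies.pointCommutator_eq_one_iff_of_step step) h
  rw [← PresentedGroup.mk_eq_one_iff, map_pointCommutator, commutator_iff, ← map_pointCommutator]
  exact PresentedGroup.one_of_mem (Set.mem_insert _ _)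

variable [DecidableEq J] (X : Multiplicative (J → ℤ) →* G) (t q : G) (r : R → G)

theorem pointConjugate_valuation (v : J → ℤ) :
    pointConjugate (valuation X t q r) v = MulAut.conj (X (.ofAdd v)) t := by
  rw [← monomial_single]; rfl

theorem satisfies_valuation
    (hx : ∀ i v, r i * X (scaleHom (V.scale i) v) = X (scaleHom (V.scale' i) v) * r i)
    (ht : ∀ i, r i * MulAut.conj (X (.ofAdd (V.offset i))) t =
      MulAut.conj (X (.ofAdd (V.offset' i))) t * r i)
    (hq : ∀ i, Commute q (r i)) : V.Satisfies (valuation X t q r) where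
  commute_x _ _ := (Commute.all _ _).map X
  conj_x i j := by
    have h_single := hx i (.ofAdd (Pi.single j 1))
    rw [scaleHom_single, scaleHom_single, map_zpow, map_zpow] at h_single
    exact mul_inv_eq_of_eq_mul h_single
  conj_pointConjugate i := by
    rw [pointConjugate_valuation, pointConjugate_valuation]
    exact mul_inv_eq_of_eq_mul (ht i)
  commute_q_r := hq

theorem exists_hom_pointCommutator_eq {R J : Type} [Fintype J] (V : CollatzSystem R J)
    {v τ : J → ℤ} (h : ¬ Relation.EqvGen V.Step v τ) :
    ∃ (P : Type) (_ : Group P) (φ : FreeGroup (Generator R J) →* P) (ζ : ℤˣ →* P),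
      Function.Injective ζ ∧ (∀ z p, Commute (ζ z) p) ∧
      (∀ w ∈ insert (pointCommutator .of τ) V.relators, φ w = 1) ∧
      φ (pointCommutator .of v) = ζ (-1) := by
  classical
  let sign (e : Multiplicative (J → ℤ)) : ℤˣ :=
    if Relation.EqvGen V.Step v e.toAdd then -1 else 1
  have sign_step (i : R) (u : Multiplicative (J → ℤ)) :
      sign (scaleHom (V.scale i) u * .ofAdd (V.offset i)) =
        sign (scaleHom (V.scale' i) u * .ofAdd (V.offset' i)) := by
    have step := Relation.EqvGen.rel (r := V.Step) _ _ ⟨i, u.toAdd, rfl, rfl⟩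
    exact if_congr ⟨fun h => h.trans _ _ _ step, fun h => h.trans _ _ _ (step.symm _ _)⟩ rfl rfl
  obtain ⟨P, _, X, t, q, r, ζ, hζ, hζ_comm, hx, ht, hq, hc⟩ := exists_group_commutator_conj_eq
    (fun i => scaleHom_injective (V.scale_ne_zero i))
    (fun i => scaleHom_injective (V.scale'_ne_zero i)) sign_step
  let φ : FreeGroup (Generator R J) →* P := FreeGroup.lift (valuation X t q r)
  have φ_of : φ ∘ FreeGroup.of = valuation X t q r := funext fun _ => FreeGroup.lift_apply_of
  have φ_pointCommutator (e : J → ℤ) : φ (pointCommutator .of e) = ζ (sign (.ofAdd e)) := by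
    rw [map_pointCommutator, φ_of, ← hc, pointCommutator, pointConjugate_valuation]
    rfl
  refine ⟨P, _, φ, ζ, hζ, hζ_comm, ?_, ?_⟩
  · rintro w (rfl | hw)
    · rw [φ_pointCommutator, show sign (.ofAdd τ) = 1 from if_neg h, map_one]
    · refine (V.satisfies_iff_forall_relators φ).mp ?_ w hw
      exact φ_of ▸ satisfies_valuation X t q r hx ht hq
  · rw [φ_pointCommutator, show sign (.ofAdd v) = -1 from if_pos (.refl v)]

end CollatzSystem

end CollatzSystem

/-! ### Mihailova subgroups -/

section Mihailova

variable {α A C P : Type*} [Group A] [Group C] [Group P]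

/-- The subgroup of `A × A` generated by the diagonal copy of a free group and by `1 × Y`. When `Y`
is the image of a set of relators, it is Mihailova's fibre product of two copies of the free group
over the group presented by these relators. -/
def mihailovaSubgroup (f : FreeGroup α →* A) (Y : Set A) : Subgroup (A × A) :=
  .closure ((Set.range fun a => (f (.of a), f (.of a))) ∪ Prod.mk 1 '' Y)

variable {f : FreeGroup α →* A} {Y : Set A}

theorem mk_one_mem_mihailovaSubgroup {y : A} (hy : y ∈ Y) : (1, y) ∈ mihailovaSubgroup f Y :=
  Subgroup.subset_closure (.inr ⟨y, hy, rfl⟩)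

theorem diagonal_mem_mihailovaSubgroup (w : FreeGroup α) : (f w, f w) ∈ mihailovaSubgroup f Y := by
  have le_comap : (⊤ : Subgroup (FreeGroup α)) ≤ (mihailovaSubgroup f Y).comap (f.prod f) := by
    rw [← FreeGroup.closure_range_of, Subgroup.closure_le]
    rintro _ ⟨a, rfl⟩
    exact Subgroup.subset_closure (.inl ⟨a, rfl⟩)
  exact le_comap (Subgroup.mem_top w)

theorem mk_one_mem_mihailovaSubgroup_of_mem_normalClosure {rels : Set (FreeGroup α)}
    (hrels : ∀ k ∈ rels, f k ∈ Y) {w : FreeGroup α} (hw : w ∈ Subgroup.normalClosure rels) :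
    (1, f w) ∈ mihailovaSubgroup f Y := by
  let N := (mihailovaSubgroup f Y).comap (MonoidHom.prod 1 f)
  have normal : N.Normal := ⟨fun k hk u => by
    have conj_mem := mul_mem (mul_mem (diagonal_mem_mihailovaSubgroup u) hk)
      (inv_mem (diagonal_mem_mihailovaSubgroup u))
    simpa [N, Subgroup.mem_comap] using conj_mem⟩
  have le : Subgroup.normalClosure rels ≤ N :=
    Subgroup.normalClosure_le_normal fun k hk => mk_one_mem_mihailovaSubgroup (hrels k hk)
  exact le hw

/-- Every element of the subgroup is of the form `(f u, f v * z e)` with `φ u = φ v * ζ e`. -/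
theorem eq_one_of_mem_mihailovaSubgroup_of_pow_eq_one (hf : Function.Injective f) {z : C →* A}
    (hz : ∀ v e, Commute (f v) (z e)) {φ : FreeGroup α →* P} {ζ : C →* P}
    (hφζ : ∀ v e, Commute (φ v) (ζ e)) (hζ : Function.Injective ζ)
    (hY : ∀ y ∈ Y, ∃ v e, y = f v * z e ∧ φ v * ζ e = 1) {n : ℕ} (hn : n ≠ 0)
    (hC : ∀ e : C, e ^ n = 1) {y : A × A} (hy : y ∈ mihailovaSubgroup f Y) (hyn : y ^ n = 1) :
    y = 1 := by
  let target := f.prodMap (f.noncommCoprod z hz)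
  let relation : Subgroup (FreeGroup α × FreeGroup α × C) :=
    (φ.comp (.fst _ _)).eqLocus ((φ.noncommCoprod ζ hφζ).comp (.snd _ _))
  have le_map : mihailovaSubgroup f Y ≤ relation.map target := by
    rw [mihailovaSubgroup, Subgroup.closure_le, Set.union_subset_iff, Set.image_subset_iff]
    constructor
    · rintro _ ⟨a, rfl⟩
      exact ⟨(.of a, .of a, 1), show φ (.of a) = φ (.of a) * ζ 1 by simp, by simp [target]⟩
    · intro y hy
      obtain ⟨v, e, rfl, h⟩ := hY y hy
      exact ⟨(1, v, e), show φ 1 = φ v * ζ e by simp [h], by simp [target]⟩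
  obtain ⟨⟨u, v, e⟩, h, rfl⟩ := le_map hy
  replace h : φ u = φ v * ζ e := h
  obtain ⟨hu, hv⟩ : f u ^ n = 1 ∧ (f v * z e) ^ n = 1 := Prod.ext_iff.mp hyn
  rw [(hz v e).mul_pow, ← map_pow z, hC, map_one, mul_one] at hv
  obtain rfl : u = 1 := by
    rwa [← map_pow, hf.eq_iff' (map_one f), pow_eq_one_iff_left hn] at hu
  obtain rfl : v = 1 := by
    rwa [← map_pow, hf.eq_iff' (map_one f), pow_eq_one_iff_left hn] at hv
  obtain rfl : e = 1 := hζ (by simpa using h.symm)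
  exact map_one target

theorem exists_map_conj_eq_sup_zpowers_iff {G : Type*} [Group G] {H : Subgroup G} {s : G} {n : ℕ}
    (hs : s ^ n = 1) (hH : s ∉ H → ∀ y ∈ H, y ^ n = 1 → y = 1) :
    (∃ g, H.map (MulAut.conj g⁻¹).toMonoidHom = H ⊔ .zpowers s) ↔ s ∈ H := by
  constructor
  · rintro ⟨g, hg⟩
    by_contra hsH
    obtain ⟨y, hy, rfl⟩ : s ∈ H.map (MulAut.conj g⁻¹).toMonoidHom :=
      hg ▸ (le_sup_right : _ ≤ H ⊔ .zpowers s) (Subgroup.mem_zpowers s)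
    have y_pow : y ^ n = 1 := (MulAut.conj g⁻¹).injective <| by
      rw [map_pow, map_one]; exact hs
    obtain rfl := hH hsH y hy y_pow
    exact hsH (by simp [one_mem])
  · intro hsH
    refine ⟨1, ?_⟩
    rw [inv_one, map_one, sup_eq_left.mpr (Subgroup.zpowers_le_of_mem hsH)]
    exact H.map_id

end Mihailova

section TwistedSubgroup

variable {α A K : Type*} [Group A] [Group K] {f : FreeGroup α →* A}

theorem mihailovaSubgroup_insert (y : A) (Y : Set A) :
    mihailovaSubgroup f (insert y Y) = mihailovaSubgroup f Y ⊔ .zpowers (1, y) := by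
  rw [mihailovaSubgroup, mihailovaSubgroup, Subgroup.zpowers_eq_closure, ← Subgroup.closure_union,
    Set.image_insert_eq, Set.insert_eq, Set.union_comm {_}, Set.union_assoc]

theorem fg_mihailovaSubgroup [Finite α] {Y : Set A} (hY : Y.Finite) :
    (mihailovaSubgroup f Y).FG :=
  (Subgroup.fg_iff _).mpr ⟨_, rfl, (Set.finite_range _).union (hY.image _)⟩

theorem closure_append_singleton (l : List K) (s : K) :
    Subgroup.closure {x | x ∈ l ++ [s]} = Subgroup.closure {x | x ∈ l} ⊔ .zpowers s := by
  rw [Subgroup.zpowers_eq_closure, ← Subgroup.closure_union]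
  congr 1
  ext x
  simp [or_comm]

namespace CollatzSystem

variable {R J : Type} [Fintype J] (V : CollatzSystem R J) (f : FreeGroup (Generator R J) →* A)
  (z : ℤˣ →* A)

/-- Mihailova's subgroup for the relators of the `CollatzSystem`, the relator
`pointCommutator τ` and, twisted by the involution `z (-1)`, the relator `pointCommutator v`. -/
noncomputable def twistedSubgroup (v τ : J → ℤ) : Subgroup (A × A) :=
  mihailovaSubgroup f (insert (f (pointCommutator .of v) * z (-1))
    (f '' insert (pointCommutator .of τ) V.relators))

variable {V f z} {v τ : J → ℤ}

theorem mk_one_mem_twistedSubgroup (h : Relation.EqvGen V.Step v τ) :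
    (1, z (-1)) ∈ V.twistedSubgroup f z v τ := by
  have untwisted : (1, f (pointCommutator .of v)) ∈ V.twistedSubgroup f z v τ :=
    mk_one_mem_mihailovaSubgroup_of_mem_normalClosure
      (fun k hk => .inr (Set.mem_image_of_mem f hk)) (pointCommutator_mem_normalClosure h)
  have twisted : (1, f (pointCommutator .of v) * z (-1)) ∈ V.twistedSubgroup f z v τ :=
    mk_one_mem_mihailovaSubgroup (Set.mem_insert _ _)
  simpa using mul_mem (inv_mem untwisted) twisted

theorem eq_one_of_mem_twistedSubgroup_of_sq_eq_one (hf : Function.Injective f)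
    (hz : ∀ w e, Commute (f w) (z e)) (h : ¬ Relation.EqvGen V.Step v τ) {y : A × A}
    (hy : y ∈ V.twistedSubgroup f z v τ) (hy2 : y ^ 2 = 1) : y = 1 := by
  obtain ⟨P, _, φ, ζ, hζ, hζ_comm, hφ, hφv⟩ := V.exists_hom_pointCommutator_eq h
  refine eq_one_of_mem_mihailovaSubgroup_of_pow_eq_one hf hz (fun w e => (hζ_comm e (φ w)).symm)
    hζ ?_ two_ne_zero Int.units_sq hy hy2
  rintro _ (rfl | ⟨k, hk, rfl⟩)
  · exact ⟨_, -1, rfl, by rw [hφv, ← map_mul, neg_one_mul, neg_neg, map_one]⟩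
  · exact ⟨k, 1, by rw [map_one, mul_one], by rw [hφ k hk, map_one, mul_one]⟩

theorem exists_map_conj_twistedSubgroup_iff (hf : Function.Injective f)
    (hz : ∀ w e, Commute (f w) (z e)) (hz1 : z (-1) ≠ 1) {D : A × A →* K}
    (hD : Function.Injective D) :
    (∃ g, ((V.twistedSubgroup f z v τ).map D).map (MulAut.conj g⁻¹).toMonoidHom =
      (V.twistedSubgroup f z v τ).map D ⊔ .zpowers (D (1, z (-1)))) ↔
      Relation.EqvGen V.Step v τ := by
  have sq : (1, z (-1)) ^ 2 = (1 : A × A) := by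
    rw [Prod.pow_mk, one_pow, ← map_pow, Int.units_sq, map_one, Prod.mk_one_one]
  have mem_iff : D (1, z (-1)) ∈ (V.twistedSubgroup f z v τ).map D ↔
      Relation.EqvGen V.Step v τ := by
    rw [Subgroup.mem_map_iff_mem hD]
    refine ⟨fun hmem => by_contra fun h => hz1 ?_, mk_one_mem_twistedSubgroup⟩
    exact congrArg Prod.snd (eq_one_of_mem_twistedSubgroup_of_sq_eq_one hf hz h hmem sq)
  rw [exists_map_conj_eq_sup_zpowers_iff (n := 2) (by rw [← map_pow, sq, map_one]), mem_iff]
  rintro hmem _ ⟨y, hy, rfl⟩ hy2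
  rw [mem_iff] at hmem
  rw [← map_pow, hD.eq_iff' (map_one D)] at hy2
  rw [eq_one_of_mem_twistedSubgroup_of_sq_eq_one hf hz hmem hy hy2, map_one]

theorem exists_list_closure_eq_map_twistedSubgroup [Finite R] (V : CollatzSystem R J)
    (f : FreeGroup (Generator R J) →* A) (z : ℤˣ →* A) (τ : J → ℤ) (D : A × A →* K) :
    ∃ l : List K, ∀ v, Subgroup.closure
      {x | x ∈ l ++ [D (1, f (pointCommutator .of v) * z (-1))]} =
        (V.twistedSubgroup f z v τ).map D := by
  have := Fintype.ofFinite R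
  obtain ⟨S, hS⟩ := (fg_mihailovaSubgroup (f := f)
    ((V.finite_relators.insert (pointCommutator .of τ)).image f))
  have map_toList : {x | x ∈ S.toList.map D} = D '' S := by ext x; simp
  refine ⟨S.toList.map D, fun v => ?_⟩
  rw [closure_append_singleton, twistedSubgroup, mihailovaSubgroup_insert, Subgroup.map_sup,
    MonoidHom.map_zpowers, ← hS, MonoidHom.map_closure, map_toList]

end CollatzSystem

end TwistedSubgroup

/-! ### Linear groups -/

section PingPong

open scoped MatrixGroups

/-- The matrix of determinant one acting on slopes by `s ↦ 6 * i + 3 - 1 / (s - 6 * i)`: it moves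
the complement of the unit interval around `6 * i` into the one around `6 * i + 3`. -/
def pingPongMatrix (i : ℤ) : GL (Fin 2) ℤ where
  val := !![6 * i + 3, -((6 * i + 3) * (6 * i)) - 1; 1, -(6 * i)]
  inv := !![-(6 * i), (6 * i + 3) * (6 * i) + 1; -1, 6 * i + 3]
  val_inv := by ext a b; fin_cases a <;> fin_cases b <;> simp <;> ring
  inv_val := by ext a b; fin_cases a <;> fin_cases b <;> simp <;> ring

/-- The nonzero vectors whose slope lies within distance one of `k`. -/
def slopeBall (k : ℤ) : Set {v : Fin 2 → ℤ // v ≠ 0} := {v | |v.1 0 - k * v.1 1| ≤ |v.1 1|}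

/-- The nonzero vectors whose slope lies within distance less than one of `k`. -/
def openSlopeBall (k : ℤ) : Set {v : Fin 2 → ℤ // v ≠ 0} := {v | |v.1 0 - k * v.1 1| < |v.1 1|}

theorem openSlopeBall_subset_slopeBall (k : ℤ) : openSlopeBall k ⊆ slopeBall k := fun v h =>
  show |v.1 0 - k * v.1 1| ≤ |v.1 1| from le_of_lt h

theorem disjoint_slopeBall {k l : ℤ} (h : 2 < |k - l|) : Disjoint (slopeBall k) (slopeBall l) := by
  refine Set.disjoint_left.mpr fun v hk hl => ?_
  have v_one_ne_zero : v.1 1 ≠ 0 := fun h1 => v.2 <| by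
    have h0 : v.1 0 = 0 := by simpa [slopeBall, h1] using hk
    ext a
    fin_cases a <;> assumption
  have two_mul_lt : 2 * |v.1 1| < |(k - l) * v.1 1| := by
    rw [abs_mul]
    exact mul_lt_mul_of_pos_right h (abs_pos.mpr v_one_ne_zero)
  have le_two_mul : |(k - l) * v.1 1| ≤ 2 * |v.1 1| :=
    calc |(k - l) * v.1 1| = |(v.1 0 - l * v.1 1) - (v.1 0 - k * v.1 1)| := by ring_nf
      _ ≤ |v.1 0 - l * v.1 1| + |v.1 0 - k * v.1 1| := abs_sub _ _
      _ ≤ |v.1 1| + |v.1 1| := add_le_add hl hk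
      _ = 2 * |v.1 1| := (two_mul _).symm
  exact absurd le_two_mul two_mul_lt.not_ge

theorem pingPongMatrix_smul_mem {i : ℤ} {v : {v : Fin 2 → ℤ // v ≠ 0}}
    (hv : v ∉ openSlopeBall (6 * i)) : pingPongMatrix i • v ∈ slopeBall (6 * i + 3) := by
  simp only [openSlopeBall, slopeBall, Set.mem_ofPred_eq, not_lt, Units.smul_coe,
    Matrix.GeneralLinearGroup.fin_two_smul, pingPongMatrix, Matrix.of_apply, Matrix.cons_val',
    Matrix.cons_val_zero, Matrix.cons_val_one, Matrix.cons_val_fin_one] at hv ⊢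
  rw [← abs_neg (v.1 1)] at hv
  refine le_of_eq_of_le ?_ (hv.trans_eq ?_) <;> congr 1 <;> ring

theorem pingPongMatrix_inv_smul_mem {i : ℤ} {v : {v : Fin 2 → ℤ // v ≠ 0}}
    (hv : v ∉ slopeBall (6 * i + 3)) : (pingPongMatrix i)⁻¹ • v ∈ openSlopeBall (6 * i) := by
  simp only [openSlopeBall, slopeBall, Set.mem_ofPred_eq, not_le, Units.smul_coe,
    Matrix.GeneralLinearGroup.fin_two_smul, pingPongMatrix, Units.inv_mk, Matrix.of_apply,
    Matrix.cons_val', Matrix.cons_val_zero, Matrix.cons_val_one, Matrix.cons_val_fin_one] at hv ⊢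
  rw [← abs_neg (v.1 0 - _)] at hv
  refine lt_of_eq_of_lt ?_ (hv.trans_eq ?_) <;> congr 1 <;> ring

theorem injective_lift_pingPongMatrix : Function.Injective (FreeGroup.lift pingPongMatrix) := by
  refine FreeGroup.injective_lift_of_ping_pong pingPongMatrix (fun i => slopeBall (6 * i + 3))
    (fun i => openSlopeBall (6 * i)) (fun i => ?_) (fun i j hij => ?_) (fun i j hij => ?_)
    (fun i j => ?_) (fun i => ?_) (fun i => ?_)
  · refine ⟨⟨![6 * i + 3, 1], fun h => by simpa using congrFun h 1⟩, by simp [slopeBall]⟩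
  · exact disjoint_slopeBall (by rw [lt_abs]; omega)
  · exact (disjoint_slopeBall (by rw [lt_abs]; omega)).mono (openSlopeBall_subset_slopeBall _)
      (openSlopeBall_subset_slopeBall _)
  · exact (disjoint_slopeBall (by rw [lt_abs]; omega)).mono_right (openSlopeBall_subset_slopeBall _)
  · rintro _ ⟨v, hv, rfl⟩
    exact pingPongMatrix_smul_mem hv
  · rintro _ ⟨v, hv, rfl⟩
    exact pingPongMatrix_inv_smul_mem hv

theorem exists_injective_freeGroup_hom_GL_two (α : Type*) [Countable α] :
    ∃ f : FreeGroup α →* GL (Fin 2) ℤ, Function.Injective f := by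
  obtain ⟨index, h_index⟩ := exists_injective_nat α
  exact ⟨(FreeGroup.lift pingPongMatrix).comp (FreeGroup.map fun a => (index a : ℤ)),
    injective_lift_pingPongMatrix.comp
      (FreeGroup.map_injective (Nat.cast_injective.comp h_index))⟩

end PingPong

section BlockDiagonal

open scoped MatrixGroups

/-- The block-diagonal matrices with two blocks of size two, as matrices indexed by `Fin 4`. -/
def blockDiagonalHom :
    Matrix (Fin 2) (Fin 2) ℤ × Matrix (Fin 2) (Fin 2) ℤ →* Matrix (Fin 4) (Fin 4) ℤ where
  toFun p := Matrix.reindexAlgEquiv ℤ ℤ (finSumFinEquiv (m := 2) (n := 2))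
    (Matrix.fromBlocks p.1 0 0 p.2)
  map_one' := by rw [Prod.fst_one, Prod.snd_one, Matrix.fromBlocks_one, map_one]
  map_mul' p q := by rw [← map_mul, Matrix.fromBlocks_multiply]; simp

theorem blockDiagonalHom_injective : Function.Injective blockDiagonalHom := fun p q h => by
  have h_blocks := (Matrix.reindexAlgEquiv ℤ ℤ (finSumFinEquiv (m := 2) (n := 2))).injective h
  obtain ⟨h₁, -, -, h₂⟩ := Matrix.fromBlocks_inj.mp h_blocks
  exact Prod.ext h₁ h₂

theorem exists_injective_GL_two_prod_hom_GL_four :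
    ∃ D : GL (Fin 2) ℤ × GL (Fin 2) ℤ →* GL (Fin 4) ℤ, Function.Injective D :=
  ⟨(Units.map blockDiagonalHom).comp MulEquiv.prodUnits.symm.toMonoidHom,
    (Units.map_injective blockDiagonalHom_injective).comp MulEquiv.prodUnits.symm.injective⟩

end BlockDiagonal

/-! ### Stack machines as systems of affine maps -/

section Digits

variable {A : Type*}

variable (A) in
/-- The base of the positional numeral system whose nonzero digits are the elements of `A`. -/
noncomputable def base : ℤ := Nat.card A + 1

theorem base_pos : 0 < base A := by unfold base; positivity

variable [Finite A]

/-- The digit standing for an optional element of `A`; `none` is the digit zero. -/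
noncomputable def digit (a : Option A) : ℤ := a.elim 0 fun a => Finite.equivFin A a + 1

/-- The integer whose digits, least significant first, form the list. -/
noncomputable def digitSum : List A → ℤ
  | [] => 0
  | a :: l => digit (some a) + base A * digitSum l

theorem digit_nonneg (a : Option A) : 0 ≤ digit a := by
  cases a <;> simp only [digit, Option.elim] <;> positivity

theorem digit_lt_base (a : Option A) : digit a < base A := by
  cases a with
  | none => exact base_pos
  | some a =>
    have := (Finite.equivFin A a).isLt
    simp only [digit, Option.elim, base]
    lia

theorem digit_injective : Function.Injective (digit (A := A)) := by
  rintro (_ | a) (_ | b) h <;> simp only [digit, Option.elim] at h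
  · rfl
  · lia
  · lia
  · have h_val : (Finite.equivFin A a : ℕ) = Finite.equivFin A b := by lia
    exact congrArg some ((Finite.equivFin A).injective (Fin.ext h_val))

theorem digit_add_base_mul_inj {a b : Option A} {u v : ℤ} :
    digit a + base A * u = digit b + base A * v ↔ a = b ∧ u = v := by
  refine ⟨fun h => ?_, by rintro ⟨rfl, rfl⟩; rfl⟩
  have h_mod := congrArg (· % base A) h
  have h_div := congrArg (· / base A) h
  simp only [Int.add_mul_emod_self_left, Int.add_mul_ediv_left _ _ base_pos.ne',
    Int.emod_eq_of_lt (digit_nonneg _) (digit_lt_base _),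
    Int.ediv_eq_zero_of_lt (digit_nonneg _) (digit_lt_base _), zero_add] at h_mod h_div
  exact ⟨digit_injective h_mod, h_div⟩

theorem digitSum_eq_head?_add_tail (l : List A) :
    digitSum l = digit l.head? + base A * digitSum l.tail := by
  cases l <;> simp [digitSum, digit]

theorem digitSum_append (l m : List A) :
    digitSum (l ++ m) = digitSum l + base A ^ l.length * digitSum m := by
  induction l with
  | nil => simp [digitSum]
  | cons a l ih => simp only [List.cons_append, digitSum, ih, List.length_cons]; ring

theorem digitSum_injective : Function.Injective (digitSum (A := A)) := by
  intro l m h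
  induction l generalizing m with
  | nil =>
    rw [digitSum_eq_head?_add_tail, digitSum_eq_head?_add_tail m, digit_add_base_mul_inj] at h
    exact (List.head?_eq_none_iff.mp h.1.symm).symm
  | cons a l ih =>
    rw [digitSum_eq_head?_add_tail, digitSum_eq_head?_add_tail m, digit_add_base_mul_inj] at h
    obtain ⟨m', rfl⟩ := List.head?_eq_some_iff.mp h.1.symm
    rw [ih h.2, List.tail_cons]

end Digits

section StackMachine

/-- A machine with a stack of letters of `A` for each `k : K`. In the state `q` it pops the top
letter `a` of the stack `stack q` (`none` if that stack is empty), pushes the word `write q a`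
instead, and passes to the state `next q a` (`none` to halt). -/
structure StackMachine (Q K A : Type*) where
  stack : Q → K
  next : Q → Option A → Option Q
  write : Q → Option A → List A

namespace StackMachine

variable {Q K A : Type*}

section Encoding

variable [Finite Q] [Finite A]

/-- A configuration as a lattice point, with one coordinate for the state and one per stack. -/
noncomputable def encode (c : Option Q × (K → List A)) : Option K → ℤ
  | none => digit c.1
  | some k => digitSum (c.2 k)

theorem encode_injective : Function.Injective (encode (Q := Q) (K := K) (A := A)) := fun _ _ h =>
  Prod.ext (digit_injective (congrFun h none))
    (funext fun k => digitSum_injective (congrFun h (some k)))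

end Encoding

variable [DecidableEq K]

/-- The transition function of a `StackMachine` on configurations, which are pairs of a state
(`none` when halted) and a content of the stacks. -/
def step (M : StackMachine Q K A) : Option Q × (K → List A) → Option (Option Q × (K → List A))
  | (none, _) => none
  | (some q, S) =>
    let k := M.stack q
    let a := (S k).head?
    some (M.next q a, Function.update S k (M.write q a ++ (S k).tail))

variable [Finite Q] [Finite A]

/-- The affine maps that the transitions of a `StackMachine` induce on lattice points; the
transition from the state `q` reading `a` is indexed by `(q, a)`. -/
noncomputable def toCollatzSystem (M : StackMachine Q K A) :
    CollatzSystem (Q × Option A) (Option K) where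
  offset i j := j.elim (digit (some i.1)) fun k => if k = M.stack i.1 then digit i.2 else 0
  scale i j := j.elim (base Q) fun k => if k = M.stack i.1 then base A else 1
  offset' i j := j.elim (digit (M.next i.1 i.2)) fun k =>
    if k = M.stack i.1 then digitSum (M.write i.1 i.2) else 0
  scale' i j := j.elim (base Q) fun k =>
    if k = M.stack i.1 then base A ^ (M.write i.1 i.2).length else 1
  scale_ne_zero i j := by
    cases j with
    | none => exact base_pos.ne'
    | some k => simpa only [Option.elim] using by split_ifs; exacts [base_pos.ne', one_ne_zero]
  scale'_ne_zero i j := by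
    cases j with
    | none => exact base_pos.ne'
    | some k =>
      simpa only [Option.elim] using by
        split_ifs; exacts [pow_ne_zero _ base_pos.ne', one_ne_zero]

variable (M : StackMachine Q K A)

theorem toCollatzSystem_step_encode {c c' : Option Q × (K → List A)} (h : M.step c = some c') :
    M.toCollatzSystem.Step (encode c) (encode c') := by
  obtain ⟨_ | q, S⟩ := c
  · cases h
  obtain rfl := Option.some.inj h
  set k := M.stack q with hk
  refine ⟨(q, (S k).head?), fun j => j.elim 0 fun l =>
    if l = k then digitSum (S l).tail else digitSum (S l), ?_, ?_⟩ <;>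
  ext (_ | l)
  · simp [encode, toCollatzSystem]
  · obtain rfl | hl := eq_or_ne l k
    · simp [encode, toCollatzSystem, ← hk, digitSum_eq_head?_add_tail (S _), add_comm]
    · simp [encode, toCollatzSystem, ← hk, hl]
  · simp [encode, toCollatzSystem]
  · obtain rfl | hl := eq_or_ne l k
    · simp [encode, toCollatzSystem, ← hk, digitSum_append, add_comm]
    · simp [encode, toCollatzSystem, ← hk, hl]

theorem rightUnique_toCollatzSystem_step : Relator.RightUnique M.toCollatzSystem.Step := by
  rintro _ b c ⟨⟨q, a⟩, u, rfl, rfl⟩ ⟨⟨q', a'⟩, u', h, rfl⟩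
  obtain rfl : q = q' := by
    have h_state := congrFun h none
    simp only [toCollatzSystem, Option.elim, Pi.add_apply, Pi.mul_apply, add_comm (base Q * _),
      digit_add_base_mul_inj, Option.some.injEq] at h_state
    exact h_state.1
  obtain rfl : a = a' := by
    have h_stack := congrFun h (some (M.stack q))
    simp only [toCollatzSystem, Option.elim, Pi.add_apply, Pi.mul_apply, if_true,
      add_comm (base A * _), digit_add_base_mul_inj] at h_stack
    exact h_stack.1
  obtain rfl : u = u' := funext fun j =>
    mul_left_cancel₀ (M.toCollatzSystem.scale_ne_zero (q, a) j)
      (congrFun (add_right_cancel h) j)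
  rfl

theorem not_toCollatzSystem_step_encode_none (S : K → List A) (b : Option K → ℤ) :
    ¬ M.toCollatzSystem.Step (encode (Q := Q) (none, S)) b := by
  rintro ⟨⟨q, a⟩, u, h, -⟩
  have h_state : digit (none : Option Q) + base Q * 0 = digit (some q) + base Q * u none := by
    simpa [encode, toCollatzSystem, add_comm] using congrFun h none
  exact nomatch (digit_add_base_mul_inj.mp h_state).1

theorem exists_encode_eq_of_toCollatzSystem_step {c : Option Q × (K → List A)} {b : Option K → ℤ}
    (h : M.toCollatzSystem.Step (encode c) b) : ∃ c', M.step c = some c' ∧ encode c' = b := by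
  obtain ⟨_ | q, S⟩ := c
  · exact absurd h (M.not_toCollatzSystem_step_encode_none S b)
  · exact ⟨_, rfl, M.rightUnique_toCollatzSystem_step (M.toCollatzSystem_step_encode rfl) h⟩

theorem eqvGen_toCollatzSystem_step_iff (c : Option Q × (K → List A)) (S : K → List A) :
    Relation.EqvGen M.toCollatzSystem.Step (encode c) (encode (Q := Q) (none, S)) ↔
      StateTransition.Reaches M.step c (none, S) := by
  rw [eqvGen_iff_reflTransGen M.rightUnique_toCollatzSystem_step
    (M.not_toCollatzSystem_step_encode_none S)]
  constructor
  · intro h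
    suffices ∀ b, Relation.ReflTransGen M.toCollatzSystem.Step (encode c) b →
        ∃ c', StateTransition.Reaches M.step c c' ∧ encode c' = b by
      obtain ⟨c', hc, hc'⟩ := this _ h
      exact encode_injective hc' ▸ hc
    intro b hb
    induction hb with
    | refl => exact ⟨c, .refl, rfl⟩
    | tail _ hstep ih =>
      obtain ⟨c', hc, rfl⟩ := ih
      obtain ⟨c'', hc', rfl⟩ := M.exists_encode_eq_of_toCollatzSystem_step hstep
      exact ⟨c'', hc.tail hc', rfl⟩
  · exact Relation.ReflTransGen.lift encode (fun _ _ => M.toCollatzSystem_step_encode) _ _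

end StackMachine

end StackMachine

namespace StackMachine

open Turing StateTransition

section Restrict

variable {Q K A : Type*} [DecidableEq K]

/-- The restriction of a machine to a set of states that is closed under its transitions. -/
def restrict (M : StackMachine Q K A) (P : Set Q)
    (hP : ∀ q ∈ P, ∀ a, ∀ q' ∈ M.next q a, q' ∈ P) : StackMachine P K A where
  stack q := M.stack q
  next q a := (M.next q a).pmap Subtype.mk (hP q q.2 a)
  write q a := M.write q a

theorem eval_step_map_val (M : StackMachine Q K A) (P : Set Q)
    (hP : ∀ q ∈ P, ∀ a, ∀ q' ∈ M.next q a, q' ∈ P) (c : Option P × (K → List A)) :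
    eval M.step (Prod.map (Option.map Subtype.val) id c) =
      (eval (M.restrict P hP).step c).map (Prod.map (Option.map Subtype.val) id) := by
  refine tr_eval' _ _ _ (fun_respects.mpr ?_) c
  rintro ⟨_ | q, S⟩
  · rfl
  · refine .single (congrArg some (Prod.ext ?_ rfl))
    simp [restrict, Option.map_pmap]

theorem reaches_restrict_iff (M : StackMachine Q K A) (P : Set Q)
    (hP : ∀ q ∈ P, ∀ a, ∀ q' ∈ M.next q a, q' ∈ P) (q : P) (S S' : K → List A) :
    Reaches (M.restrict P hP).step (some q, S) (none, S') ↔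
      (none, S') ∈ eval M.step (some q.1, S) := by
  have h_inj : Function.Injective
      (Prod.map (Option.map (Subtype.val (p := (· ∈ P)))) (id (α := K → List A))) :=
    (Option.map_injective Subtype.val_injective).prodMap Function.injective_id
  have h_eval := M.eval_step_map_val P hP (some q, S)
  calc Reaches (M.restrict P hP).step (some q, S) (none, S')
      ↔ (none, S') ∈ eval (M.restrict P hP).step (some q, S) := by
        rw [mem_eval]; exact (and_iff_left rfl).symm
    _ ↔ (none, S') ∈ eval M.step (some q.1, S) := by
        change _ ↔ _ ∈ eval M.step (Prod.map (Option.map Subtype.val) id (some q, S))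
        rw [h_eval, Part.mem_map_iff]
        exact ⟨fun h => ⟨_, h, rfl⟩, fun ⟨_, h, h'⟩ => h_inj (a₂ := (none, S')) h' ▸ h⟩

end Restrict

section TM2

variable {K Γ Λ σ : Type u} [Inhabited K]

/-- The machine that runs a `TM2` program whose stacks share one alphabet, one statement per step.
Statements that use no stack are made to read and restore the top of the stack `default`. -/
def ofTM2 (M : Λ → TM2.Stmt (fun _ : K => Γ) Λ σ) :
    StackMachine (TM2.Stmt (fun _ : K => Γ) Λ σ × σ) K Γ where
  stack
    | (.push k _ _, _) | (.peek k _ _, _) | (.pop k _ _, _) => k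
    | _ => default
  next
    | (.push _ _ q, v), _ => some (q, v)
    | (.peek _ f q, v), a | (.pop _ f q, v), a => some (q, f v a)
    | (.load f q, v), _ => some (q, f v)
    | (.branch f q₁ q₂, v), _ => some (cond (f v) q₁ q₂, v)
    | (.goto f, v), _ => some (M (f v), v)
    | (.halt, _), _ => none
  write
    | (.push _ f _, v), a => f v :: a.toList
    | (.pop _ _ _, _), _ => []
    | _, a => a.toList

theorem mem_stmts_of_mem_ofTM2_next [Inhabited Λ] {M : Λ → TM2.Stmt (fun _ : K => Γ) Λ σ}
    {T : Finset Λ} (hT : TM2.Supports M T) (p : TM2.Stmt (fun _ : K => Γ) Λ σ × σ)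
    (hp : some p.1 ∈ TM2.stmts M T) (a : Option Γ) :
    ∀ p' ∈ (ofTM2 M).next p a, some p'.1 ∈ TM2.stmts M T := by
  classical
  obtain ⟨q, v⟩ := p
  have h_supp := TM2.stmts_supportsStmt hT hp
  cases q with
  | goto f =>
    rintro _ ⟨⟩
    exact Finset.some_mem_insertNone.mpr
      (Finset.mem_biUnion.mpr ⟨f v, h_supp v, TM2.stmts₁_self⟩)
  | halt => rintro _ ⟨⟩
  | branch f q₁ q₂ =>
    rintro _ ⟨⟩
    refine TM2.stmts_trans ?_ hp
    cases f v <;> simp [TM2.stmts₁, TM2.stmts₁_self]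
  | _ =>
    rintro _ ⟨⟩
    exact TM2.stmts_trans (by simp [TM2.stmts₁, TM2.stmts₁_self]) hp

variable [DecidableEq K]

/-- The configuration of `ofTM2 M` corresponding to one of `M`. -/
def ofTM2Cfg (M : Λ → TM2.Stmt (fun _ : K => Γ) Λ σ) (c : TM2.Cfg (fun _ : K => Γ) Λ σ) :
    Option (TM2.Stmt (fun _ : K => Γ) Λ σ × σ) × (K → List Γ) :=
  (c.l.map fun l => (M l, c.var), c.stk)

theorem reaches₁_ofTM2_stepAux (M : Λ → TM2.Stmt (fun _ : K => Γ) Λ σ)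
    (q : TM2.Stmt (fun _ : K => Γ) Λ σ) (v : σ) (S : K → List Γ) :
    Reaches₁ (ofTM2 M).step (some (q, v), S) (ofTM2Cfg M (TM2.stepAux q v S)) := by
  have head_tail (l : List Γ) : l.head?.toList ++ l.tail = l := by cases l <;> rfl
  have head {c c' d} (h : (ofTM2 M).step c = some c') (h' : Reaches₁ (ofTM2 M).step c' d) :
      Reaches₁ (ofTM2 M).step c d := .head h h'
  induction q generalizing v S with
  | push k f q ih => exact head (by simp [step, ofTM2, head_tail]) (ih v _)
  | peek k f q ih => exact head (by simp [step, ofTM2, head_tail]) (ih _ _)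
  | pop k f q ih => exact head (by simp [step, ofTM2]) (ih _ _)
  | load f q ih => exact head (by simp [step, ofTM2, head_tail]) (ih _ S)
  | branch f q₁ q₂ ih₁ ih₂ =>
    refine head (c' := (some (cond (f v) q₁ q₂, v), S)) (by simp [step, ofTM2, head_tail]) ?_
    rw [TM2.stepAux]
    cases f v
    · exact ih₂ v S
    · exact ih₁ v S
  | goto f => exact .single (by simp [step, ofTM2, ofTM2Cfg, head_tail])
  | halt => exact .single (by simp [step, ofTM2, ofTM2Cfg, head_tail])

theorem eval_ofTM2_step (M : Λ → TM2.Stmt (fun _ : K => Γ) Λ σ)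
    (c : TM2.Cfg (fun _ : K => Γ) Λ σ) :
    eval (ofTM2 M).step (ofTM2Cfg M c) = (eval (TM2.step M) c).map (ofTM2Cfg M) := by
  refine tr_eval' _ _ _ (fun_respects.mpr ?_) c
  rintro ⟨_ | l, v, S⟩
  · rfl
  · exact reaches₁_ofTM2_stepAux M (M l) v S

theorem exists_finite_reaches_iff_of_supports [Inhabited Λ] [Finite σ]
    {M : Λ → TM2.Stmt (fun _ : K => Γ) Λ σ} {T : Finset Λ} (hT : TM2.Supports M T) {l : Λ}
    (hl : l ∈ T) (v : σ) :
    ∃ (Q : Type u) (_ : Finite Q) (N : StackMachine Q K Γ) (q : Q), ∀ S S' : K → List Γ,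
      Reaches N.step (some q, S) (none, S') ↔
        ∃ w, ⟨none, w, S'⟩ ∈ eval (TM2.step M) ⟨some l, v, S⟩ := by
  classical
  let P : Set (TM2.Stmt (fun _ : K => Γ) Λ σ × σ) := {p | some p.1 ∈ TM2.stmts M T}
  have hP : P.Finite := (((TM2.stmts M T).eraseNone.finite_toSet).prod Set.finite_univ).subset
    fun p hp => ⟨Finset.mem_eraseNone.mpr hp, trivial⟩
  have h_init : (M l, v) ∈ P := Finset.some_mem_insertNone.mpr
    (Finset.mem_biUnion.mpr ⟨l, hl, TM2.stmts₁_self⟩)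
  refine ⟨P, hP, (ofTM2 M).restrict P (mem_stmts_of_mem_ofTM2_next hT), ⟨_, h_init⟩,
    fun S S' => ?_⟩
  rw [reaches_restrict_iff]
  change (none, S') ∈ eval (ofTM2 M).step (ofTM2Cfg M ⟨some l, v, S⟩) ↔ _
  rw [eval_ofTM2_step, Part.mem_map_iff]
  constructor
  · rintro ⟨⟨_ | _, w, _⟩, hc, h⟩
    · cases h
      exact ⟨w, hc⟩
    · cases h
  · rintro ⟨w, hw⟩
    exact ⟨_, hw, rfl⟩

end TM2

end StackMachine

section Input

theorem primrec_of_forall_ne_zero_eq_div_two {α : Type*} [Primcodable α] {f : ℕ → α}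
    {g : ℕ → α → α} (hg : Primrec₂ g) (hf : ∀ n, n ≠ 0 → f n = g n (f (n / 2))) : Primrec f := by
  have h_rec : Primrec₂ fun (_ : Unit) n => f n := by
    refine Primrec.nat_strong_rec _
      (g := fun _ l => if l.length = 0 then some (f 0) else l[l.length / 2]?.map (g l.length))
      ?_ fun _ n => ?_
    · have h_length : Primrec fun p : Unit × List α => p.2.length :=
        Primrec.list_length.comp Primrec.snd
      exact Primrec.ite (Primrec.eq.comp h_length (Primrec.const 0)) (Primrec.const _)
        (Primrec.option_map (Primrec.list_getElem?.comp Primrec.snd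
          (Primrec.nat_div.comp h_length (Primrec.const 2)))
          (hg.comp (h_length.comp Primrec.fst) Primrec.snd))
    · obtain rfl | hn := eq_or_ne n 0
      · simp
      · simp [hn, hf n hn, List.getElem?_range (show n / 2 < n by lia)]
  exact h_rec.comp (Primrec.const ()) Primrec.id

open Turing.PartrecToTM2 GLPrimcodable

theorem trNat_eq_cons {n : ℕ} (hn : n ≠ 0) :
    trNat n = (if n % 2 = 0 then Γ'.bit0 else Γ'.bit1) :: trNat (n / 2) := by
  have trNat_cast (p : PosNum) : trNat p = trPosNum p := by
    rw [trNat, ← Num.cast_pos, Num.of_to_nat]; rfl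
  obtain ⟨p, rfl⟩ : ∃ p : PosNum, (p : ℕ) = n := by
    have h_cast := Num.to_of_nat n
    generalize (n : Num) = m at h_cast
    cases m with
    | zero => exact absurd h_cast.symm hn
    | pos p => exact ⟨p, h_cast⟩
  rw [trNat_cast]
  cases p with
  | one => simp [trPosNum]
  | bit0 p =>
    have h_half : ((p : ℕ) + p) / 2 = p := by lia
    have h_mod : ((p : ℕ) + p) % 2 = 0 := by lia
    rw [PosNum.cast_bit0, h_half, h_mod, trNat_cast]; rfl
  | bit1 p =>
    have h_half : ((p : ℕ) + p + 1) / 2 = p := by lia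
    have h_mod : ((p : ℕ) + p + 1) % 2 = 1 := by lia
    rw [PosNum.cast_bit1, h_half, h_mod, trNat_cast]; rfl

theorem primrec_digitSum_trList_singleton : Primrec fun n : ℕ => digitSum (trList [n]) := by
  refine primrec_of_forall_ne_zero_eq_div_two
    (g := fun n d => (if n % 2 = 0 then digit (some Γ'.bit0) else digit (some Γ'.bit1)) +
      base Γ' * d) ?_ fun n hn => ?_
  · have h_even : PrimrecPred fun p : ℕ × ℤ => p.1 % 2 = 0 :=
      Primrec.eq.comp (Primrec.nat_mod.comp Primrec.fst (Primrec.const 2)) (Primrec.const 0)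
    exact primrec_int_add.comp (Primrec.ite h_even (Primrec.const _) (Primrec.const _))
      (primrec_int_mul.comp (Primrec.const _) Primrec.snd)
  · simp only [trList, trNat_eq_cons hn, List.cons_append, digitSum]
    split_ifs <;> rfl

instance : Fintype K' :=
  ⟨{.main, .rev, .aux, .stack}, fun k => by cases k <;> decide⟩

theorem exists_code_of_rePred {p : ℕ → Prop} (hp : REPred p) :
    ∃ c : Turing.ToPartrec.Code, ∀ n x, x ∈ c.eval [n] ↔ x = [0] ∧ p n := by
  have h_zero : Partrec fun n => (Part.assert (p n) fun _ => Part.some ()).map fun _ => 0 :=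
    hp.map (Computable.const 0).to₂
  obtain ⟨c, hc⟩ := Turing.ToPartrec.Code.exists_code (Nat.Partrec'.part_iff₁.mpr h_zero)
  refine ⟨c, fun n x => ?_⟩
  rw [hc ⟨[n], rfl⟩]
  change _ ∈ pure <$> (Part.assert (p n) fun _ => Part.some ()).map (fun _ => 0) ↔ _
  simp [eq_comm, and_comm]

/-- The initial stacks of the machine `Turing.PartrecToTM2.tr` on the input `n`. -/
def inputStacks (n : ℕ) : K' → List Γ' := K'.elim (trList [n]) [] [] []

theorem exists_stackMachine_of_rePred {p : ℕ → Prop} (hp : REPred p) :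
    ∃ (Q : Type) (_ : Finite Q) (M : StackMachine Q K' Γ') (q : Q), ∀ n,
      StateTransition.Reaches M.step (some q, inputStacks n) (none, inputStacks 0) ↔ p n := by
  obtain ⟨c, hc⟩ := exists_code_of_rePred hp
  let : Inhabited Λ' := ⟨trNormal c .halt⟩
  have h_supp : Turing.TM2.Supports tr (codeSupp c .halt) := tr_supports c .halt
  obtain ⟨Q, hQ, M, q, hM⟩ :=
    StackMachine.exists_finite_reaches_iff_of_supports h_supp h_supp.1 none
  refine ⟨Q, hQ, M, q, fun n => (hM _ _).trans ?_⟩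
  change (∃ w, (⟨none, w, inputStacks 0⟩ : Cfg') ∈
    StateTransition.eval (Turing.TM2.step tr) (init c [n])) ↔ p n
  rw [tr_eval]
  constructor
  · rintro ⟨_, h_mem⟩
    obtain ⟨x, hx, -⟩ := (Part.mem_map_iff halt).mp h_mem
    exact ((hc n x).mp hx).2
  · exact fun hn => ⟨none, Part.mem_map halt ((hc n [0]).mpr ⟨rfl, hn⟩)⟩

theorem exists_collatzSystem_of_rePred {p : ℕ → Prop} (hp : REPred p) :
    ∃ (R J : Type) (_ : Fintype R) (_ : Fintype J) (V : CollatzSystem R J) (γ : ℕ → J → ℤ)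
      (τ : J → ℤ), (∀ j, Primrec fun n => γ n j) ∧
        ∀ n, Relation.EqvGen V.Step (γ n) τ ↔ p n := by
  obtain ⟨Q, _, M, q, hM⟩ := exists_stackMachine_of_rePred hp
  refine ⟨Q × Option Γ', Option K', Fintype.ofFinite _, inferInstance, M.toCollatzSystem,
    fun n => StackMachine.encode (some q, inputStacks n),
    StackMachine.encode (Q := Q) (none, inputStacks 0), ?_, fun n => ?_⟩
  · rintro (_ | _ | _ | _ | _)
    case some.main => exact primrec_digitSum_trList_singleton
    all_goals exact Primrec.const _
  · rw [M.eqvGen_toCollatzSystem_step_iff, hM]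

end Input

/-! ### Computability in `GL(4,ℤ)` -/

section Primrec

open GLPrimcodable
open scoped MatrixGroups

variable {α : Type*} [Primcodable α]

theorem primrec_GL_iff {f : α → GL (Fin 4) ℤ} :
    Primrec f ↔ Primrec fun a => ((f a).val, (f a).inv) := by
  let _ : Primcodable {p : Matrix (Fin 4) (Fin 4) ℤ × Matrix (Fin 4) (Fin 4) ℤ //
      p.1 * p.2 = 1 ∧ p.2 * p.1 = 1} := Primcodable.subtype primrecPred_isUnitPair
  rw [← Primrec.of_equiv_iff (unitsEquivProdSubtype (Matrix (Fin 4) (Fin 4) ℤ)),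
    ← Primrec.subtype_val_iff (hp := primrecPred_isUnitPair)]
  rfl

variable {f g : α → GL (Fin 4) ℤ}

theorem primrec_GL_mul (hf : Primrec f) (hg : Primrec g) : Primrec fun a => f a * g a := by
  rw [primrec_GL_iff] at *
  exact (primrec_matMul.comp ((Primrec.fst.comp hf).pair (Primrec.fst.comp hg))).pair
    (primrec_matMul.comp ((Primrec.snd.comp hg).pair (Primrec.snd.comp hf)))

theorem primrec_GL_inv (hf : Primrec f) : Primrec fun a => (f a)⁻¹ := by
  rw [primrec_GL_iff] at *
  exact (Primrec.snd.comp hf).pair (Primrec.fst.comp hf)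

theorem primrec_GL_pow (g : GL (Fin 4) ℤ) : Primrec fun n : ℕ => g ^ n := by
  refine (Primrec.nat_rec₁ (f := fun _ h => h * g) 1
    (primrec_GL_mul .snd (.const g))).of_eq fun n => ?_
  induction n with
  | zero => rfl
  | succ n ih => rw [pow_succ, ← ih]

theorem primrec_GL_zpow (g : GL (Fin 4) ℤ) : Primrec fun z : ℤ => g ^ z := by
  refine (primrec_GL_mul ((primrec_GL_pow g).comp primrec_toNat)
    (primrec_GL_inv ((primrec_GL_pow g).comp primrec_negToNat))).of_eq fun z => ?_
  conv_rhs => rw [← toNat_sub_neg_toNat z, zpow_sub, zpow_natCast, zpow_natCast]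

variable {R J : Type*} [Fintype J] {γ : α → J → ℤ}

theorem primrec_GL_monomial (x : J → GL (Fin 4) ℤ) (hγ : ∀ j, Primrec fun a => γ a j) :
    Primrec fun a => monomial x (γ a) := by
  unfold monomial
  induction (Finset.univ : Finset J).toList with
  | nil => exact .const 1
  | cons j l ih =>
    simp only [List.map_cons, List.prod_cons]
    exact primrec_GL_mul ((primrec_GL_zpow (x j)).comp (hγ j)) ih

theorem primrec_GL_pointCommutator (g : Generator R J → GL (Fin 4) ℤ)
    (hγ : ∀ j, Primrec fun a => γ a j) : Primrec fun a => pointCommutator g (γ a) := by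
  have primrec_conjugate : Primrec fun a => pointConjugate g (γ a) :=
    primrec_GL_mul (primrec_GL_mul (primrec_GL_monomial _ hγ) (.const (g .t)))
      (primrec_GL_inv (primrec_GL_monomial _ hγ))
  exact primrec_GL_mul (primrec_GL_mul (primrec_GL_mul (.const (g .q)) primrec_conjugate)
    (primrec_GL_inv (.const (g .q)))) (primrec_GL_inv primrec_conjugate)

end Primrec

section Reduction

open GLPrimcodable
open scoped MatrixGroups

theorem manyOneReducible_conjugate_closures_of_rePred {p : ℕ → Prop} (hp : REPred p) :
    p ≤₀ fun l : List (GL (Fin 4) ℤ) × List (GL (Fin 4) ℤ) =>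
      ∃ g : GL (Fin 4) ℤ, Subgroup.map (MulAut.conj g⁻¹).toMonoidHom
        (Subgroup.closure {x | x ∈ l.1}) = Subgroup.closure {x | x ∈ l.2} := by
  obtain ⟨R, J, _, _, V, γ, τ, hγ, hV⟩ := exists_collatzSystem_of_rePred hp
  have : Countable (Generator R J) := Finite.to_countable
  obtain ⟨f, hf⟩ := exists_injective_freeGroup_hom_GL_two (Generator R J)
  obtain ⟨D, hD⟩ := exists_injective_GL_two_prod_hom_GL_four
  let z : ℤˣ →* GL (Fin 2) ℤ := Matrix.GeneralLinearGroup.scalar (Fin 2)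
  have hz (w e) : Commute (f w) (z e) :=
    (Matrix.GeneralLinearGroup.scalar_commute e (f w)).symm
  have hz1 : z (-1) ≠ 1 := fun h => by
    have h00 := congrArg (fun M : GL (Fin 2) ℤ => M 0 0) h
    simp [z] at h00
  obtain ⟨l, hl⟩ := V.exists_list_closure_eq_map_twistedSubgroup f z τ D
  let s : GL (Fin 4) ℤ := D (1, z (-1))
  let twisted (n : ℕ) : GL (Fin 4) ℤ := D (1, f (pointCommutator .of (γ n)) * z (-1))
  have primrec_twisted : Primrec twisted := by
    let φ := (D.comp (MonoidHom.inr _ _)).comp f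
    refine (primrec_GL_mul (primrec_GL_pointCommutator (φ ∘ .of) hγ) (.const s)).of_eq fun n => ?_
    rw [← map_pointCommutator]
    simp [φ, s, twisted, ← map_mul]
  have primrec_list : Primrec fun n => l ++ [twisted n] :=
    Primrec.list_append.comp (.const l) (Primrec.list_cons.comp primrec_twisted (.const []))
  refine ⟨fun n => (l ++ [twisted n], l ++ [twisted n] ++ [s]), ?_, fun n => ?_⟩
  · exact (primrec_list.pair (Primrec.list_append.comp primrec_list (.const [s]))).to_comp
  · simp only [closure_append_singleton (l ++ _), twisted, hl, ← hV]
    exact (CollatzSystem.exists_map_conj_twistedSubgroup_iff hf hz hz1 hD).symm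

end Reduction

end UndecidableConjugacy

open GLPrimcodable in
/-- There is no algorithm deciding whether the subgroups of `GL(4,ℤ)` generated by two
given finite lists of elements are conjugate in `GL(4,ℤ)`. -/
theorem conjugacy_of_fg_subgroups_of_GL4Z_undecidable :
    ¬ ComputablePred (fun l : List (Matrix.GeneralLinearGroup (Fin 4) ℤ) ×
        List (Matrix.GeneralLinearGroup (Fin 4) ℤ) =>
      ∃ g : Matrix.GeneralLinearGroup (Fin 4) ℤ,
        Subgroup.map (MulAut.conj g⁻¹).toMonoidHom
            (Subgroup.closure {x | x ∈ l.1}) =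
          Subgroup.closure {x | x ∈ l.2}) := by
  intro h
  let halts (n : ℕ) : Prop := ((Denumerable.ofNat Nat.Partrec.Code n).eval 0).Dom
  have halts_re : REPred halts :=
    (ComputablePred.halting_problem_re 0).comp (Computable.ofNat Nat.Partrec.Code)
  have halting_reducible : (fun c : Nat.Partrec.Code => (c.eval 0).Dom) ≤₀ halts :=
    ⟨Encodable.encode, Computable.encode, fun c => by simp [halts]⟩
  exact ComputablePred.halting_problem 0 <| ComputablePred.computable_of_manyOneReducible
    (halting_reducible.trans
      (UndecidableConjugacy.manyOneReducible_conjugate_closures_of_rePred halts_re)) h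
end

section
/- Let π : F₂ → H be a surjective group homomorphism and L = {(u,v) ∈ F₂ × F₂ : π(u) = π(v)} the Mihailova subgroup. If a ∈ F₂ × F₂ and L ⊆ a⁻¹La (i.e., a·x·a⁻¹ ∈ L for every x ∈ L), then L = a⁻¹La. -/
/-- The Mihailova subgroup associated to a homomorphism `π : F₂ → H`:
`L = {(u,v) ∈ F₂ × F₂ : π(u) = π(v)}`. -/
def mihailova {H : Type*} [Group H] (π : FreeGroup (Fin 2) →* H) :
    Subgroup (FreeGroup (Fin 2) × FreeGroup (Fin 2)) where
  carrier := {p | π p.1 = π p.2}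
  one_mem' := by simp
  mul_mem' := by
    intro a b ha hb
    simp only [Set.mem_setOf_eq, Prod.fst_mul, Prod.snd_mul, map_mul] at *
    rw [ha, hb]
  inv_mem' := by
    intro a ha
    simp only [Set.mem_setOf_eq, Prod.fst_inv, Prod.snd_inv, map_inv] at *
    rw [ha]

/-!
A subgroup `L` of `G × K` projecting onto both factors determines the normal subgroup
`N = {k | (1, k) ∈ L}` of `K`. Multiplying `a` by an element of `L` reduces to `a = (1, c)`, and for
`x ∈ L` the conjugate of `x` by `(1, c)` is again in `L` exactly when `c` and `x.2` commute
modulo `N`. This condition does not change when `c` is replaced by `c⁻¹`, so if conjugation by `a`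
maps `L` into itself, conjugation by `a⁻¹` does too. The Mihailova subgroup contains the diagonal,
so it projects onto both factors.
-/

section SubdirectProduct

open scoped commutatorElement

variable {G K : Type*} [Group G] [Group K] {L : Subgroup (G × K)}

theorem conj_one_mk_mem_iff_commute [L.goursatSnd.Normal] {x : G × K} (hx : x ∈ L) (c : K) :
    (1, c) * x * (1, c)⁻¹ ∈ L ↔ Commute (c : K ⧸ L.goursatSnd) (x.2 : K ⧸ L.goursatSnd) := by
  have commutator_eq : ⁅((1, c) : G × K), x⁆ = (1, ⁅c, x.2⁆) := by
    ext <;> simp [commutatorElement_def]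
  calc (1, c) * x * (1, c)⁻¹ ∈ L
      ↔ ⁅((1, c) : G × K), x⁆ ∈ L := (L.mul_mem_cancel_right (inv_mem hx)).symm
    _ ↔ ⁅c, x.2⁆ ∈ L.goursatSnd := by rw [commutator_eq, Subgroup.mem_goursatSnd]
    _ ↔ ⁅(c : K ⧸ L.goursatSnd), (x.2 : K ⧸ L.goursatSnd)⁆ = 1 :=
      (QuotientGroup.eq_one_iff _).symm
    _ ↔ Commute (c : K ⧸ L.goursatSnd) (x.2 : K ⧸ L.goursatSnd) :=
      commutatorElement_eq_one_iff_commute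

theorem one_mk_mem_normalizer_of_conj_mem [L.goursatSnd.Normal] {c : K}
    (h : ∀ x ∈ L, (1, c) * x * (1, c)⁻¹ ∈ L) :
    ((1, c) : G × K) ∈ Subgroup.normalizer (L : Set (G × K)) := by
  have conj_inv_mem : ∀ x ∈ L, (1, c)⁻¹ * x * (1, c) ∈ L := fun x hx => by
    have commute_inv : Commute ((c⁻¹ : K) : K ⧸ L.goursatSnd) (x.2 : K ⧸ L.goursatSnd) :=
      ((conj_one_mk_mem_iff_commute hx c).1 (h x hx)).inv_left
    simpa using (conj_one_mk_mem_iff_commute hx c⁻¹).2 commute_inv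
  refine Subgroup.mem_normalizer_iff.2 fun x => ⟨h x, fun hx => ?_⟩
  simpa only [mul_assoc, inv_mul_cancel_left, inv_mul_cancel, mul_one] using conj_inv_mem _ hx

theorem mem_normalizer_of_conj_mem (hfst : Function.Surjective (Prod.fst ∘ L.subtype))
    (hsnd : Function.Surjective (Prod.snd ∘ L.subtype)) {a : G × K}
    (h : ∀ x ∈ L, a * x * a⁻¹ ∈ L) : a ∈ Subgroup.normalizer (L : Set (G × K)) := by
  have := Subgroup.normal_goursatSnd hsnd
  obtain ⟨⟨d, hd⟩, hda : d.1 = a.1⟩ := hfst a.1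
  obtain ⟨c, rfl⟩ : ∃ c : K, a = d * (1, c) :=
    ⟨d.2⁻¹ * a.2, by ext <;> simp [hda]⟩
  have conj_mem : ∀ x ∈ L, (1, c) * x * (1, c)⁻¹ ∈ L := fun x hx => by
    simpa only [mul_inv_rev, mul_assoc, inv_mul_cancel_left, inv_mul_cancel, mul_one] using
      L.mul_mem (L.mul_mem (L.inv_mem hd) (h x hx)) hd
  exact mul_mem (Subgroup.le_normalizer hd) (one_mk_mem_normalizer_of_conj_mem conj_mem)

theorem mihailova_eq_conj_of_le_general (hfst : Function.Surjective (Prod.fst ∘ L.subtype))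
    (hsnd : Function.Surjective (Prod.snd ∘ L.subtype)) (a : G × K)
    (h : ∀ x ∈ L, a * x * a⁻¹ ∈ L) :
    L = Subgroup.map (MulAut.conj a⁻¹).toMonoidHom L :=
  (Subgroup.mem_normalizer_iff_map_conj_eq.1
    (inv_mem (mem_normalizer_of_conj_mem hfst hsnd h))).symm

end SubdirectProduct

theorem mihailova_fst_surjective {H : Type*} [Group H] (π : FreeGroup (Fin 2) →* H) :
    Function.Surjective (Prod.fst ∘ (mihailova π).subtype) :=
  fun g => ⟨⟨(g, g), rfl⟩, rfl⟩

theorem mihailova_snd_surjective {H : Type*} [Group H] (π : FreeGroup (Fin 2) →* H) :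
    Function.Surjective (Prod.snd ∘ (mihailova π).subtype) :=
  fun g => ⟨⟨(g, g), rfl⟩, rfl⟩

theorem mihailova_eq_conj_of_le {H : Type*} [Group H] (π : FreeGroup (Fin 2) →* H)
    (hπ : Function.Surjective π) (a : FreeGroup (Fin 2) × FreeGroup (Fin 2))
    (h : ∀ x ∈ mihailova π, a * x * a⁻¹ ∈ mihailova π) :
    mihailova π = Subgroup.map (MulAut.conj a⁻¹).toMonoidHom (mihailova π) :=
  mihailova_eq_conj_of_le_general (mihailova_fst_surjective π) (mihailova_snd_surjective π) a h
end

section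
/- Let R be a finite subset of F₂, let N be the normal closure of R in F₂, let H = F₂/N, and let π : F₂ → H be the quotient homomorphism. Then the Mihailova subgroup L = {(u,v) ∈ F₂ × F₂ : π(u) = π(v)} equals the subgroup of F₂ × F₂ generated by the set {(a,a), (b,b)} ∪ {(1, r) : r ∈ R}, where a, b are the two free generators of F₂. In particular, if R has m elements then L is generated by m + 2 elements, so L is finitely generated. -/
/-!
If `X` generates `G`, a subgroup of `G × G` containing `(x, x)` for every `x ∈ X` contains the whole
diagonal. Conjugating `(1, r)` by `(g, g)` gives `(1, g r g⁻¹)`, so if the subgroup also contains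
`(1, r)` for every `r ∈ R`, it contains `1 × N`, where `N` is the normal closure of `R`. Finally,
if `u` and `v` agree modulo `N`, then `(u, v) = (u, u) (1, u⁻¹ v)` with `u⁻¹ v ∈ N`.
-/

section KernelPair

variable {G H : Type*} [Group G] [Monoid H]

/-- The kernel pair `{(u, v) : π u = π v}` of a homomorphism `π : G →* H`, that is, the fibre
product of `π` with itself. It is the Mihailova subgroup for an arbitrary source group. -/
def kernelPair (π : G →* H) : Subgroup (G × G) :=
  (π.comp (MonoidHom.fst G G)).eqLocus (π.comp (MonoidHom.snd G G))

theorem mem_kernelPair {π : G →* H} {p : G × G} : p ∈ kernelPair π ↔ π p.1 = π p.2 :=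
  Iff.rfl

/-- The pairs `(x, x)` with `x ∈ X` and `(1, r)` with `r ∈ R`: Mihailova's generators, where
`X` generates `G` and `R` is a set of relators. -/
def mihailovaGenerators (X R : Set G) : Set (G × G) :=
  (fun x => (x, x)) '' X ∪ (fun r => (1, r)) '' R

theorem diag_mem_of_closure_eq_top {K : Subgroup (G × G)} {X : Set G}
    (hX : Subgroup.closure X = ⊤) (hK : ∀ x ∈ X, (x, x) ∈ K) (g : G) : (g, g) ∈ K := by
  have closure_le : Subgroup.closure X ≤ K.comap ((MonoidHom.id G).prod (MonoidHom.id G)) :=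
    (Subgroup.closure_le _).2 hK
  exact closure_le (hX ▸ Subgroup.mem_top g)

theorem normal_comap_inr_of_diag_mem {K : Subgroup (G × G)} (hdiag : ∀ g, (g, g) ∈ K) :
    (K.comap (MonoidHom.inr G G)).Normal where
  conj_mem n hn g := by
    simpa using K.mul_mem (K.mul_mem (hdiag g) hn) (K.inv_mem (hdiag g))

theorem kernelPair_le {π : G →* H} {K : Subgroup (G × G)} (hdiag : ∀ g, (g, g) ∈ K)
    (hker : π.ker ≤ K.comap (MonoidHom.inr G G)) : kernelPair π ≤ K := by
  rintro ⟨u, v⟩ huv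
  have inv_mul_mem : u⁻¹ * v ∈ π.ker := π.eq_iff.1 (mem_kernelPair.1 huv).symm
  simpa using K.mul_mem (hdiag u) (hker inv_mul_mem)

theorem mihailovaGenerators_subset_kernelPair {π : G →* H} (X : Set G) {R : Set G}
    (hR : R ⊆ π.ker) : mihailovaGenerators X R ⊆ kernelPair π := by
  rintro _ (⟨x, -, rfl⟩ | ⟨r, hr, rfl⟩)
  · exact mem_kernelPair.2 rfl
  · exact mem_kernelPair.2 ((map_one π).trans (hR hr).symm)

theorem kernelPair_eq_closure_mihailovaGenerators {π : G →* H} {X R : Set G}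
    (hX : Subgroup.closure X = ⊤) (hR : Subgroup.normalClosure R = π.ker) :
    kernelPair π = Subgroup.closure (mihailovaGenerators X R) := by
  have hdiag : ∀ g, (g, g) ∈ Subgroup.closure (mihailovaGenerators X R) :=
    diag_mem_of_closure_eq_top hX fun x hx =>
      Subgroup.subset_closure (Or.inl (Set.mem_image_of_mem _ hx))
  apply le_antisymm
  · have := normal_comap_inr_of_diag_mem hdiag
    refine kernelPair_le hdiag (hR ▸ Subgroup.normalClosure_le_normal fun r hr => ?_)
    exact Subgroup.subset_closure (Or.inr (Set.mem_image_of_mem _ hr))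
  · exact (Subgroup.closure_le _).2 <|
      mihailovaGenerators_subset_kernelPair X (hR ▸ Subgroup.subset_normalClosure)

theorem ncard_mihailovaGenerators_le {X R : Set G} (hX : X.Finite) (hR : R.Finite) :
    (mihailovaGenerators X R).ncard ≤ R.ncard + X.ncard :=
  calc (mihailovaGenerators X R).ncard
      ≤ ((fun x => (x, x)) '' X).ncard + ((fun r => ((1 : G), r)) '' R).ncard :=
        Set.ncard_union_le _ _
    _ ≤ X.ncard + R.ncard := add_le_add (Set.ncard_image_le hX) (Set.ncard_image_le hR)
    _ = R.ncard + X.ncard := add_comm _ _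

theorem mihailova_eq_closure_and_fg_general {π : G →* H} {X R : Set G}
    (hX : Subgroup.closure X = ⊤) (hR : Subgroup.normalClosure R = π.ker) :
    kernelPair π = Subgroup.closure (mihailovaGenerators X R) ∧
      (X.Finite → R.Finite → ∃ S : Finset (G × G), S.card ≤ R.ncard + X.ncard ∧
        Subgroup.closure (S : Set (G × G)) = kernelPair π) := by
  have heq := kernelPair_eq_closure_mihailovaGenerators hX hR
  refine ⟨heq, fun hXfin hRfin => ?_⟩
  have hfin : (mihailovaGenerators X R).Finite := (hXfin.image _).union (hRfin.image _)
  refine ⟨hfin.toFinset, ?_, by rw [hfin.coe_toFinset, heq]⟩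
  exact (Set.ncard_eq_toFinset_card _ hfin).symm.trans_le (ncard_mihailovaGenerators_le hXfin hRfin)

end KernelPair

theorem mihailova_eq_kernelPair {H : Type*} [Group H] (π : FreeGroup (Fin 2) →* H) :
    mihailova π = kernelPair π :=
  rfl

theorem closure_freeGroup_of_zero_of_one :
    Subgroup.closure {FreeGroup.of (0 : Fin 2), FreeGroup.of 1} = ⊤ := by
  rw [← FreeGroup.closure_range_of, ← Set.image_univ, ← Finset.coe_univ, Finset.univ_fin2,
    Finset.coe_pair, Set.image_pair]

theorem mihailova_eq_closure_and_fg (R : Finset (FreeGroup (Fin 2))) :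
    (mihailova (QuotientGroup.mk'
        (Subgroup.normalClosure (R : Set (FreeGroup (Fin 2))))) =
      Subgroup.closure
        ({(FreeGroup.of 0, FreeGroup.of 0), (FreeGroup.of 1, FreeGroup.of 1)} ∪
          (fun r => ((1 : FreeGroup (Fin 2)), r)) '' (R : Set (FreeGroup (Fin 2))))) ∧
    (∃ S : Finset (FreeGroup (Fin 2) × FreeGroup (Fin 2)),
      S.card ≤ R.card + 2 ∧
      Subgroup.closure (S : Set (FreeGroup (Fin 2) × FreeGroup (Fin 2))) =
        mihailova (QuotientGroup.mk'
          (Subgroup.normalClosure (R : Set (FreeGroup (Fin 2)))))) := by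
  simpa [mihailova_eq_kernelPair, mihailovaGenerators, Set.image_pair, Set.ncard_pair,
    FreeGroup.of_injective.eq_iff] using
    mihailova_eq_closure_and_fg_general closure_freeGroup_of_zero_of_one
      (QuotientGroup.ker_mk' (Subgroup.normalClosure (R : Set (FreeGroup (Fin 2))))).symm
end

section
/- Let N be a group, let p ≥ 1, and let φ, ψ : FreeGroup (Fin (p+1)) → Aut N be two homomorphisms such that φ and ψ agree on the generators x_0, …, x_{p-1}, ψ(x_p) = 1, and φ(x_p) lies in the subgroup of Aut N generated by {φ(x_0), …, φ(x_{p-1})}. Then the semidirect products N ⋊_φ FreeGroup (Fin (p+1)) and N ⋊_ψ FreeGroup (Fin (p+1)) are isomorphic as groups. -/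
/-!
Let `S` consist of all generators but the last (any set of generators will do), and choose words
`w i` in the generators from `S` with `φ (w i) = (ψ (x i))⁻¹ * φ (x i)` for `i ∉ S`. The
endomorphism of the free group fixing `x i` for `i ∈ S` and sending `x i` to `x i * w i` for `i ∉ S`
leaves every `w i` unchanged, so it is inverted by the one built from `(w i)⁻¹`. As `φ` and `ψ`
agree on the words `w i`, composing `ψ` with this automorphism gives `φ`.
-/

open FreeGroup (of)
open Subgroup (closure)

section Transvection

variable {α : Type*} {S : Set α}

/-- The endomorphism of a free group fixing the generators in `S` and multiplying each remaining
generator `x i` on the right by `w i`, an element of the subgroup generated by `S`. The values of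
`w` on `S` are ignored. -/
noncomputable def transvectionHom (w : α → closure (of '' S)) : FreeGroup α →* FreeGroup α :=
  FreeGroup.lift fun i ↦ of i * (Sᶜ.mulIndicator w i : closure (of '' S))

theorem transvectionHom_of_mem (w : α → closure (of '' S)) {i : α} (hi : i ∈ S) :
    transvectionHom w (of i) = of i := by
  simp [transvectionHom, hi]

theorem transvectionHom_of_notMem (w : α → closure (of '' S)) {i : α} (hi : i ∉ S) :
    transvectionHom w (of i) = of i * w i := by
  simp [transvectionHom, hi]

theorem transvectionHom_apply_coe (w : α → closure (of '' S)) (x : closure (of '' S)) :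
    transvectionHom w x = x := by
  have fixes_generators : Set.EqOn (transvectionHom w) (MonoidHom.id _) (of '' S) := by
    rintro _ ⟨i, hi, rfl⟩
    exact transvectionHom_of_mem w hi
  exact MonoidHom.eqOn_closure fixes_generators x.2

theorem transvectionHom_inv_comp (w : α → closure (of '' S)) :
    (transvectionHom w⁻¹).comp (transvectionHom w) = MonoidHom.id _ := by
  ext i
  by_cases hi : i ∈ S
  · simp [transvectionHom_of_mem, hi]
  · simp [transvectionHom_of_notMem, transvectionHom_apply_coe, hi]

/-- The transvection `transvectionHom w` as an automorphism of the free group. -/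
noncomputable def transvection (w : α → closure (of '' S)) : FreeGroup α ≃* FreeGroup α :=
  (transvectionHom w).toMulEquiv (transvectionHom w⁻¹) (transvectionHom_inv_comp w)
    (by simpa only [inv_inv] using transvectionHom_inv_comp w⁻¹)

theorem exists_mulEquiv_comp_eq_of_eqOn {G : Type*} [Group G] {f g : FreeGroup α →* G}
    (hS : Set.EqOn f g (of '' S))
    (hcoset : ∀ i ∉ S, (g (of i))⁻¹ * f (of i) ∈ closure (f '' (of '' S))) :
    ∃ θ : FreeGroup α ≃* FreeGroup α, g.comp θ.toMonoidHom = f := by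
  have hlift : ∀ i ∉ S, ∃ w : closure (of '' S), f w = (g (of i))⁻¹ * f (of i) := by
    intro i hi
    obtain ⟨w, hw, hfw⟩ := (f.map_closure (of '' S)).ge (hcoset i hi)
    exact ⟨⟨w, hw⟩, hfw⟩
  choose! w hw using hlift
  refine ⟨transvection w, FreeGroup.ext_hom _ _ fun i ↦ ?_⟩
  change g (transvectionHom w (of i)) = f (of i)
  by_cases hi : i ∈ S
  · rw [transvectionHom_of_mem w hi, hS (Set.mem_image_of_mem of hi)]
  · have hgw : g (w i) = f (w i) := (MonoidHom.eqOn_closure hS (w i).2).symm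
    rw [transvectionHom_of_notMem w hi, map_mul, hgw, hw i hi, mul_inv_cancel_left]

end Transvection

theorem semidirect_iso_of_last_generator_in_closure_general {N α : Type*} [Group N] {S : Set α}
    {φ ψ : FreeGroup α →* MulAut N} (hS : Set.EqOn φ ψ (of '' S))
    (hcoset : ∀ i ∉ S, (ψ (of i))⁻¹ * φ (of i) ∈ closure (φ '' (of '' S))) :
    Nonempty ((N ⋊[φ] FreeGroup α) ≃* (N ⋊[ψ] FreeGroup α)) := by
  obtain ⟨θ, hθ⟩ := exists_mulEquiv_comp_eq_of_eqOn hS hcoset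
  exact ⟨SemidirectProduct.congr (.refl N) θ fun g ↦ (DFunLike.congr_fun hθ g).symm⟩

theorem semidirect_iso_of_last_generator_in_closure {N : Type*} [Group N] (p : ℕ) (hp : 1 ≤ p)
    (φ ψ : FreeGroup (Fin (p + 1)) →* MulAut N)
    (hagree : ∀ i : Fin (p + 1), (i : ℕ) < p → φ (FreeGroup.of i) = ψ (FreeGroup.of i))
    (hψ : ψ (FreeGroup.of (Fin.last p)) = 1)
    (hφ : φ (FreeGroup.of (Fin.last p)) ∈
      Subgroup.closure ((fun i : Fin (p + 1) => φ (FreeGroup.of i)) ''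
        {i : Fin (p + 1) | (i : ℕ) < p})) :
    Nonempty ((N ⋊[φ] FreeGroup (Fin (p + 1))) ≃* (N ⋊[ψ] FreeGroup (Fin (p + 1)))) := by
  refine semidirect_iso_of_last_generator_in_closure_general
    (S := {i : Fin (p + 1) | (i : ℕ) < p}) (Set.forall_mem_image.2 hagree) fun i hi ↦ ?_
  obtain rfl : i = Fin.last p := Fin.eq_last_of_not_lt hi
  simpa only [hψ, inv_one, one_mul, Set.image_image] using hφ
end

section
/- Let A be an abelian group, let r ≥ 2, let φ : FreeGroup (Fin r) → Aut A be a homomorphism, and let G = A ⋊_φ FreeGroup (Fin r) be the semidirect product. Then every normal subgroup of G whose underlying group is commutative is contained in the canonical copy of A inside G (the image of the inclusion A → G). In particular, the canonical copy of A is the unique maximal normal abelian subgroup of G. -/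
/-!
A nontrivial normal abelian subgroup `N` of a free group is free and abelian (Nielsen–Schreier),
hence infinite cyclic, so conjugation by a square acts trivially on it. For distinct free generators
`a` and `b` and `1 ≠ w ∈ N`, both `a ^ 2` and `b ^ 2` therefore commute with `w`. Commuting elements
of a free group lie in a common cyclic subgroup, so some nonzero power of `w` lies in `⟨a⟩` and
another in `⟨b⟩`. Since `⟨a⟩ ∩ ⟨b⟩ = 1`, this makes `w` a torsion element, which is absurd. In a
semidirect product by a free group, this applies to the projection of a normal abelian subgroup.
-/

theorem mulAut_sq_eq_one_of_isCyclic {G : Type*} [Group G] [IsCyclic G] [Infinite G]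
    (f : MulAut G) : f ^ 2 = 1 := by
  have units_sq {n : ℕ} (hn : n = 0) (u : (ZMod n)ˣ) : u ^ 2 = 1 := by
    subst hn
    exact Int.units_sq u
  apply (IsCyclic.mulAutMulEquiv G).injective
  rw [map_pow, map_one, units_sq Nat.card_eq_zero_of_infinite]

theorem commute_sq_of_mem_normal_of_isCyclic {G : Type*} [Group G] (N : Subgroup G) [N.Normal]
    [IsCyclic N] [Infinite N] (g : G) {w : G} (hw : w ∈ N) : Commute (g ^ 2) w := by
  have conj_eq_one : (MulAut.conjNormal (g ^ 2) : MulAut N) = 1 := by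
    rw [map_pow, mulAut_sq_eq_one_of_isCyclic]
  have conj_w : g ^ 2 * w * (g ^ 2)⁻¹ = w := by
    rw [← MulAut.conjNormal_apply (g ^ 2) (⟨w, hw⟩ : N), conj_eq_one, MulAut.one_apply]
  exact mul_inv_eq_iff_eq_mul.mp conj_w

theorem infinite_of_nontrivial_of_isMulTorsionFree {G : Type*} [Group G] [Nontrivial G]
    [IsMulTorsionFree G] : Infinite G := by
  obtain ⟨g, hg⟩ := exists_ne (1 : G)
  exact .of_injective (fun n : ℤ ↦ g ^ n)
    (injective_zpow_iff_not_isOfFinOrder.mpr (not_isOfFinOrder_of_isMulTorsionFree hg))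

section FreeGenerators

variable {α : Type*} {a b : α}

theorem freeGroup_commute_of_of_iff : Commute (FreeGroup.of a) (FreeGroup.of b) ↔ a = b := by
  classical
  refine ⟨fun h ↦ ?_, fun h ↦ h ▸ .refl _⟩
  have words_eq : [(a, true), (b, true)] = [(b, true), (a, true)] := by
    simpa [FreeGroup.toWord_mul, FreeGroup.reduce.cons] using congrArg FreeGroup.toWord h.eq
  exact congrArg Prod.fst (List.cons.inj words_eq).1

theorem freeGroup_disjoint_zpowers_of_of_ne (hab : a ≠ b) :
    Disjoint (Subgroup.zpowers (FreeGroup.of a)) (Subgroup.zpowers (FreeGroup.of b)) := by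
  classical
  rw [Subgroup.disjoint_def]
  rintro x ⟨m, rfl⟩ ⟨n, h_eq⟩
  let kill_b : FreeGroup α →* FreeGroup α := FreeGroup.lift (Pi.mulSingle a (FreeGroup.of a))
  calc FreeGroup.of a ^ m
      = kill_b (FreeGroup.of a ^ m) := by simp [kill_b]
    _ = kill_b (FreeGroup.of b ^ n) := congrArg kill_b h_eq.symm
    _ = 1 := by simp [kill_b, hab.symm]

end FreeGenerators

section IsFreeGroup

variable {G : Type*} [Group G] [IsFreeGroup G]

theorem isFreeGroup_isCyclic_of_isMulCommutative [IsMulCommutative G] : IsCyclic G := by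
  have : Subsingleton (IsFreeGroup.Generators G) := by
    refine ⟨fun a b ↦ freeGroup_commute_of_of_iff.mp ?_⟩
    apply (IsFreeGroup.toFreeGroup G).symm.injective
    rw [map_mul, map_mul, mul_comm']
  have : IsCyclic (FreeGroup (IsFreeGroup.Generators G)) := by
    cases isEmpty_or_nonempty (IsFreeGroup.Generators G)
    · infer_instance
    · have := uniqueOfSubsingleton (Classical.arbitrary (IsFreeGroup.Generators G))
      infer_instance
  exact (IsFreeGroup.toFreeGroup G).isCyclic.mpr this

theorem isFreeGroup_exists_mem_zpowers_of_commute {x y : G} (h : Commute x y) :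
    ∃ c : G, x ∈ Subgroup.zpowers c ∧ y ∈ Subgroup.zpowers c := by
  have pair_commutes : ∀ u ∈ ({x, y} : Set G), ∀ v ∈ ({x, y} : Set G), u * v = v * u := by
    rintro u (rfl | rfl) v (rfl | rfl)
    exacts [rfl, h.eq, h.eq.symm, rfl]
  have := Subgroup.isMulCommutative_closure pair_commutes
  have : IsCyclic (Subgroup.closure {x, y}) := isFreeGroup_isCyclic_of_isMulCommutative
  obtain ⟨c, hc⟩ := (Subgroup.isCyclic_iff_exists_zpowers_eq_top _).mp this
  refine ⟨c, ?_, ?_⟩ <;> rw [hc] <;> exact Subgroup.subset_closure (by simp)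

theorem isFreeGroup_exists_zpow_mem_zpowers_of_commute {x y : G} (h : Commute x y) (hx : x ≠ 1) :
    ∃ n : ℤ, n ≠ 0 ∧ y ^ n ∈ Subgroup.zpowers x := by
  obtain ⟨c, ⟨i, rfl⟩, ⟨j, rfl⟩⟩ := isFreeGroup_exists_mem_zpowers_of_commute h
  refine ⟨i, ?_, j, zpow_comm c i j⟩
  rintro rfl
  exact hx (zpow_zero c)

end IsFreeGroup

theorem freeGroup_normal_eq_bot_of_isMulCommutative {α : Type*} [Nontrivial α]
    (N : Subgroup (FreeGroup α)) [N.Normal] [IsMulCommutative N] : N = ⊥ := by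
  by_contra hN
  have : Nontrivial N := N.nontrivial_iff_ne_bot.mpr hN
  have : Infinite N := infinite_of_nontrivial_of_isMulTorsionFree
  have : IsCyclic N := isFreeGroup_isCyclic_of_isMulCommutative
  obtain ⟨w, hwN, hw⟩ := N.bot_or_exists_ne_one.resolve_left hN
  have zpow_mem_zpowers_of (a : α) :
      ∃ n : ℤ, n ≠ 0 ∧ w ^ n ∈ Subgroup.zpowers (FreeGroup.of a) := by
    have sq_ne_one : FreeGroup.of a ^ 2 ≠ 1 :=
      (pow_eq_one_iff_left two_ne_zero).not.mpr (FreeGroup.of_ne_one a)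
    obtain ⟨n, hn, hmem⟩ := isFreeGroup_exists_zpow_mem_zpowers_of_commute
      (commute_sq_of_mem_normal_of_isCyclic N (FreeGroup.of a) hwN) sq_ne_one
    exact ⟨n, hn, Subgroup.zpowers_le.mpr (Subgroup.npow_mem_zpowers _ 2) hmem⟩
  obtain ⟨a, b, hab⟩ := exists_pair_ne α
  obtain ⟨m, hm, ha⟩ := zpow_mem_zpowers_of a
  obtain ⟨n, hn, hb⟩ := zpow_mem_zpowers_of b
  have w_zpow_eq_one : w ^ (m * n) = 1 := by
    apply Subgroup.disjoint_def.mp (freeGroup_disjoint_zpowers_of_of_ne hab)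
    · rw [zpow_mul]
      exact zpow_mem ha n
    · rw [zpow_mul']
      exact zpow_mem hb m
  exact mul_ne_zero hm hn ((IsMulTorsionFree.zpow_eq_one_iff_right hw).mp w_zpow_eq_one)

theorem normal_abelian_subgroup_le_inl_general {A α : Type*} [Group A] [Nontrivial α]
    (φ : FreeGroup α →* MulAut A) (K : Subgroup (A ⋊[φ] FreeGroup α)) [K.Normal]
    [IsMulCommutative K] :
    K ≤ (SemidirectProduct.inl : A →* A ⋊[φ] FreeGroup α).range := by
  have : (K.map SemidirectProduct.rightHom).Normal :=
    .map ‹_› _ SemidirectProduct.rightHom_surjective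
  rw [SemidirectProduct.range_inl_eq_ker_rightHom, ← Subgroup.map_eq_bot_iff]
  exact freeGroup_normal_eq_bot_of_isMulCommutative _

theorem normal_abelian_subgroup_le_inl {A : Type*} [CommGroup A] (r : ℕ) (hr : 2 ≤ r)
    (φ : FreeGroup (Fin r) →* MulAut A)
    (K : Subgroup (A ⋊[φ] FreeGroup (Fin r))) (hK : K.Normal)
    (hab : ∀ x ∈ K, ∀ y ∈ K, x * y = y * x) :
    K ≤ (SemidirectProduct.inl : A →* A ⋊[φ] FreeGroup (Fin r)).range := by
  have : Nontrivial (Fin r) := Fin.nontrivial_iff_two_le.mpr hr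
  have : IsMulCommutative K := .of_setLike_mul_comm hab
  exact normal_abelian_subgroup_le_inl_general φ K
end

section
/- Let n ≥ 1 and r, s ≥ 2, and let φ : FreeGroup (Fin r) → Aut(ℤⁿ) and ψ : FreeGroup (Fin s) → Aut(ℤⁿ) be homomorphisms. If the semidirect products ℤⁿ ⋊_φ FreeGroup (Fin r) and ℤⁿ ⋊_ψ FreeGroup (Fin s) are isomorphic as groups, then the images φ(FreeGroup (Fin r)) and ψ(FreeGroup (Fin s)) are conjugate subgroups of Aut(ℤⁿ): there exists α ∈ Aut(ℤⁿ) with ψ(FreeGroup (Fin s)) = α ∘ φ(FreeGroup (Fin r)) ∘ α⁻¹. -/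
/-- `ℤⁿ`, viewed as a multiplicative group so that it can be used in `SemidirectProduct`. -/
abbrev Zn (n : ℕ) : Type := Multiplicative (Fin n → ℤ)

/-!
A free group of rank at least two has no nontrivial abelian normal subgroup: for `a ≠ 1` one can
choose letters `l ≠ m` such that `l a l⁻¹` and `m a m⁻¹` are reduced as written, and then their
products in the two orders are distinct reduced words. Hence any isomorphism `f` of the semidirect
products, followed by the projection to the free factor, kills the abelian normal subgroup `ℤⁿ`.
The same holds for `f⁻¹`, so `f` restricts to an automorphism `α` of `ℤⁿ`. Both actions are
conjugation inside the semidirect product, so `α` carries the action of `w` to that of `f w`.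
-/

theorem range_comp_of_surjective {G H K : Type*} [Group G] [Group H] [Group K] (g : H →* K)
    {f : G →* H} (hf : Function.Surjective f) : (g.comp f).range = g.range := by
  rw [MonoidHom.range_comp, MonoidHom.range_eq_top.2 hf, ← MonoidHom.range_eq_map]

/-- A group is semisimple, in the terminology of Robinson's *A Course in the Theory of Groups*,
if its only abelian normal subgroup is the trivial one. This is what makes the abelian kernel of a
semidirect product with such a quotient invariant under isomorphisms. -/
def IsSemisimpleGroup (G : Type*) [Group G] : Prop :=
  ∀ A : Subgroup G, A.Normal → IsMulCommutative A → A = ⊥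

theorem IsSemisimpleGroup.le_ker {G H : Type*} [Group G] [Group H] (hH : IsSemisimpleGroup H)
    {f : G →* H} (hf : Function.Surjective f) (A : Subgroup G) [hA : A.Normal]
    [IsMulCommutative A] : A ≤ f.ker :=
  (A.map_eq_bot_iff).1 (hH (A.map f) (hA.map f hf) inferInstance)

section FreeGroup

open FreeGroup

variable {ι : Type*} {l m : ι × Bool} {v w : List (ι × Bool)}

/-- The word `l w l⁻¹`, not necessarily reduced, for a letter `l`; in the encoding of letters used
by `FreeGroup`, the inverse of the letter `(i, b)` is `(i, !b)`. -/
def conjWord (l : ι × Bool) (w : List (ι × Bool)) : List (ι × Bool) :=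
  l :: w ++ [(l.1, !l.2)]

theorem mk_conjWord (l : ι × Bool) (w : List (ι × Bool)) :
    FreeGroup.mk (conjWord l w) = FreeGroup.mk [l] * FreeGroup.mk w * (FreeGroup.mk [l])⁻¹ :=
  rfl

theorem letters_not_cancel_iff :
    (l.1 = m.1 → l.2 = m.2) ↔ l ≠ (m.1, !m.2) := by
  rw [Ne, Prod.ext_iff, not_and, Bool.eq_not, not_ne_iff]

theorem isReduced_conjWord (hw : IsReduced w) (hne : w ≠ [])
    (hhead : l ≠ ((w.head hne).1, !(w.head hne).2)) (hlast : l ≠ w.getLast hne) :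
    IsReduced (conjWord l w) := by
  refine List.IsChain.append (List.IsChain.cons hw ?_) (List.isChain_singleton _) ?_
  · rw [List.head?_eq_some_head hne]
    rintro _ ⟨⟩
    exact letters_not_cancel_iff.2 hhead
  · rw [List.getLast?_cons, List.getLast?_eq_some_getLast hne]
    rintro _ ⟨⟩ _ ⟨⟩
    exact letters_not_cancel_iff.2 (by simpa using hlast.symm)

theorem isReduced_conjWord_append_conjWord (hlm : l ≠ m) (hv : IsReduced (conjWord l v))
    (hw : IsReduced (conjWord m w)) : IsReduced (conjWord l v ++ conjWord m w) := by
  refine List.IsChain.append hv hw ?_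
  rw [conjWord, List.getLast?_concat]
  rintro _ ⟨⟩ _ ⟨⟩
  exact letters_not_cancel_iff.2 fun h ↦ hlm (by simpa [Prod.ext_iff] using h)

theorem not_commute_mk_conjWord (hlm : l ≠ m) (hv : IsReduced (conjWord l v))
    (hw : IsReduced (conjWord m w)) :
    ¬ Commute (FreeGroup.mk (conjWord l v)) (FreeGroup.mk (conjWord m w)) := by
  classical
  intro h
  have hwords : conjWord l v ++ conjWord m w = conjWord m w ++ conjWord l v := by
    rw [← (isReduced_conjWord_append_conjWord hlm hv hw).reduce_eq,
      ← (isReduced_conjWord_append_conjWord hlm.symm hw hv).reduce_eq]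
    exact reduce.sound h
  exact hlm (List.cons.inj hwords).1

theorem nontrivial_compl_pair_letters [Nontrivial ι] (p q : ι × Bool) :
    ({p, q}ᶜ : Set (ι × Bool)).Nontrivial := by
  classical
  obtain ⟨i, j, hij⟩ := exists_pair_ne ι
  let letters : Finset (ι × Bool) := {i, j} ×ˢ Finset.univ
  have hletters : letters.card = 4 := by simp [letters, hij]
  have hcard : 1 < (letters \ {p, q}).card := by
    have := Finset.le_card_sdiff {p, q} letters
    have := Finset.card_le_two (a := p) (b := q)
    omega
  refine (Finset.one_lt_card_iff_nontrivial.1 hcard).mono fun l hl ↦ ?_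
  simpa using (Finset.mem_sdiff.1 hl).2

theorem exists_not_commute_conj [Nontrivial ι] {a : FreeGroup ι} (ha : a ≠ 1) :
    ∃ g h : FreeGroup ι, ¬ Commute (g * a * g⁻¹) (h * a * h⁻¹) := by
  classical
  have hne : a.toWord ≠ [] := mt toWord_eq_nil_iff.1 ha
  let p := a.toWord.head hne
  obtain ⟨l, hl, m, hm, hlm⟩ := nontrivial_compl_pair_letters (p.1, !p.2) (a.toWord.getLast hne)
  simp only [Set.mem_compl_iff, Set.mem_insert_iff, Set.mem_singleton_iff, not_or] at hl hm
  refine ⟨FreeGroup.mk [l], FreeGroup.mk [m], ?_⟩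
  have h := not_commute_mk_conjWord hlm (isReduced_conjWord isReduced_toWord hne hl.1 hl.2)
    (isReduced_conjWord isReduced_toWord hne hm.1 hm.2)
  simpa only [mk_conjWord, mk_toWord] using h

theorem isSemisimpleGroup_freeGroup (ι : Type*) [Nontrivial ι] :
    IsSemisimpleGroup (FreeGroup ι) := by
  intro A hA hcomm
  refine (Subgroup.eq_bot_iff_forall A).2 fun a ha ↦ ?_
  by_contra hne
  obtain ⟨g, h, hgh⟩ := exists_not_commute_conj hne
  exact hgh (Subgroup.le_centralizer A (hA.conj_mem a ha h) _ (hA.conj_mem a ha g))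

end FreeGroup

section SemidirectProduct

open SemidirectProduct

theorem conj_inl {N F : Type*} [CommGroup N] [Group F] {φ : F →* MulAut N}
    (w : N ⋊[φ] F) (x : N) : w * inl x * w⁻¹ = inl (φ w.right x) := by
  ext <;> simp [mul_comm]

theorem map_range_inl_le {N₁ N₂ F₁ F₂ : Type*} [CommGroup N₁] [Group N₂] [Group F₁] [Group F₂]
    {φ : F₁ →* MulAut N₁} {ψ : F₂ →* MulAut N₂} (hF₂ : IsSemisimpleGroup F₂)
    {f : N₁ ⋊[φ] F₁ →* N₂ ⋊[ψ] F₂} (hf : Function.Surjective f) :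
    (inl : N₁ →* N₁ ⋊[φ] F₁).range.map f ≤ (inl : N₂ →* N₂ ⋊[ψ] F₂).range := by
  have : (inl : N₁ →* N₁ ⋊[φ] F₁).range.Normal := by
    rw [range_inl_eq_ker_rightHom]
    infer_instance
  rw [range_inl_eq_ker_rightHom (φ := ψ), Subgroup.map_le_iff_le_comap, MonoidHom.comap_ker]
  have hsurj : Function.Surjective (rightHom.comp f) := rightHom_surjective.comp hf
  exact hF₂.le_ker hsurj _

variable {N₁ N₂ F₁ F₂ : Type*} [CommGroup N₁] [CommGroup N₂] [Group F₁] [Group F₂]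
  {φ : F₁ →* MulAut N₁} {ψ : F₂ →* MulAut N₂}

theorem map_range_inl_eq (hF₁ : IsSemisimpleGroup F₁) (hF₂ : IsSemisimpleGroup F₂)
    (f : N₁ ⋊[φ] F₁ ≃* N₂ ⋊[ψ] F₂) :
    (inl : N₁ →* N₁ ⋊[φ] F₁).range.map (f : N₁ ⋊[φ] F₁ →* N₂ ⋊[ψ] F₂) =
      (inl : N₂ →* N₂ ⋊[ψ] F₂).range := by
  refine le_antisymm (map_range_inl_le hF₂ f.surjective) ?_
  rw [Subgroup.map_equiv_eq_comap_symm, ← Subgroup.map_le_iff_le_comap]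
  exact map_range_inl_le hF₁ f.symm.surjective

theorem exists_mulEquiv_inl (hF₁ : IsSemisimpleGroup F₁) (hF₂ : IsSemisimpleGroup F₂)
    (f : N₁ ⋊[φ] F₁ ≃* N₂ ⋊[ψ] F₂) : ∃ e : N₁ ≃* N₂, ∀ x, f (inl x) = inl (e x) := by
  have hrange : ((f : N₁ ⋊[φ] F₁ →* N₂ ⋊[ψ] F₂).comp inl).range =
      (inl : N₂ →* N₂ ⋊[ψ] F₂).range := by
    rw [MonoidHom.range_comp, map_range_inl_eq hF₁ hF₂]
  let e₁ : N₁ ≃* (inl : N₂ →* N₂ ⋊[ψ] F₂).range :=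
    (MonoidHom.ofInjective (f.injective.comp inl_injective)).trans
      (MulEquiv.subgroupCongr hrange)
  let e₂ : N₂ ≃* (inl : N₂ →* N₂ ⋊[ψ] F₂).range := MonoidHom.ofInjective inl_injective
  exact ⟨e₁.trans e₂.symm, fun x ↦ (MonoidHom.apply_ofInjective_symm inl_injective (e₁ x)).symm⟩

theorem mulAutCongr_apply_right {f : N₁ ⋊[φ] F₁ ≃* N₂ ⋊[ψ] F₂} {e : N₁ ≃* N₂}
    (he : ∀ x, f (inl x) = inl (e x)) (w : N₁ ⋊[φ] F₁) :
    MulAut.congr e (φ w.right) = ψ (f w).right := by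
  ext y
  obtain ⟨x, rfl⟩ := e.surjective y
  apply inl_injective (φ := ψ)
  calc inl (MulAut.congr e (φ w.right) (e x))
      = inl (e (φ w.right x)) := by simp [MulAut.congr]
    _ = f (w * inl x * w⁻¹) := by rw [conj_inl, he]
    _ = f w * inl (e x) * (f w)⁻¹ := by rw [map_mul, map_mul, map_inv, he]
    _ = inl (ψ (f w).right (e x)) := conj_inl _ _

theorem images_conjugate_of_semidirect_iso_general (hF₁ : IsSemisimpleGroup F₁)
    (hF₂ : IsSemisimpleGroup F₂) (f : N₁ ⋊[φ] F₁ ≃* N₂ ⋊[ψ] F₂) :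
    ∃ e : N₁ ≃* N₂, φ.range.map (MulAut.congr e).toMonoidHom = ψ.range := by
  obtain ⟨e, he⟩ := exists_mulEquiv_inl hF₁ hF₂ f
  refine ⟨e, ?_⟩
  have hequiv : ((MulAut.congr e).toMonoidHom.comp φ).comp rightHom =
      (ψ.comp rightHom).comp (f : N₁ ⋊[φ] F₁ →* N₂ ⋊[ψ] F₂) :=
    MonoidHom.ext (mulAutCongr_apply_right he)
  calc φ.range.map (MulAut.congr e).toMonoidHom
      = ((MulAut.congr e).toMonoidHom.comp φ).range := (MonoidHom.range_comp _ _).symm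
    _ = (((MulAut.congr e).toMonoidHom.comp φ).comp rightHom).range :=
        (range_comp_of_surjective _ rightHom_surjective).symm
    _ = ((ψ.comp rightHom).comp (f : N₁ ⋊[φ] F₁ →* N₂ ⋊[ψ] F₂)).range := by rw [hequiv]
    _ = (ψ.comp rightHom).range := range_comp_of_surjective _ f.surjective
    _ = ψ.range := range_comp_of_surjective _ rightHom_surjective

end SemidirectProduct

theorem images_conjugate_of_semidirect_iso (n r s : ℕ) (hn : 1 ≤ n) (hr : 2 ≤ r) (hs : 2 ≤ s)
    (φ : FreeGroup (Fin r) →* MulAut (Zn n)) (ψ : FreeGroup (Fin s) →* MulAut (Zn n))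
    (hiso : Nonempty ((Zn n ⋊[φ] FreeGroup (Fin r)) ≃* (Zn n ⋊[ψ] FreeGroup (Fin s)))) :
    ∃ α : MulAut (Zn n),
      Subgroup.map (MulAut.conj α).toMonoidHom φ.range = ψ.range := by
  have := Fin.nontrivial_iff_two_le.2 hr
  have := Fin.nontrivial_iff_two_le.2 hs
  exact hiso.elim <| images_conjugate_of_semidirect_iso_general
    (isSemisimpleGroup_freeGroup _) (isSemisimpleGroup_freeGroup _)
end

section
/- Let Γ be a subgroup of GL(2,ℚ) such that (i) the only Γ-invariant ℚ-subspaces of ℚ² are 0 and ℚ², and (ii) every ℚ-linear endomorphism of ℚ² commuting with every element of Γ is a scalar multiple of the identity. Let M be a subgroup of GL(2,ℚ) × GL(2,ℚ) (acting on ℚ² × ℚ² componentwise) which contains the diagonal subgroup Δ(Γ) = {(g,g) : g ∈ Γ} and contains at least one element (u,v) with u ≠ v. Then the only 2-dimensional M-invariant ℚ-subspaces of ℚ² × ℚ² are H_0 = ℚ² × {0} and H_∞ = {0} × ℚ². -/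
/-- The horizontal plane `H_0 = ℚ² × {0}` inside `ℚ² × ℚ²`. -/
def H0 : Submodule ℚ ((Fin 2 → ℚ) × (Fin 2 → ℚ)) :=
  (⊤ : Submodule ℚ (Fin 2 → ℚ)).prod (⊥ : Submodule ℚ (Fin 2 → ℚ))

/-- The vertical plane `H_∞ = {0} × ℚ²` inside `ℚ² × ℚ²`. -/
def Hinf : Submodule ℚ ((Fin 2 → ℚ) × (Fin 2 → ℚ)) :=
  (⊥ : Submodule ℚ (Fin 2 → ℚ)).prod (⊤ : Submodule ℚ (Fin 2 → ℚ))

/-!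
Let `W ⊆ V × V` be invariant. Its fibre `{y | (0, y) ∈ W}` and its first projection are
`Γ`-invariant, hence each is `0` or `V`. Unless `W` is one of `0`, `0 × V`, `V × V`, the fibre is
`0` and the projection is `V`, so `W` is the graph of an endomorphism `f` commuting with `Γ`. Such
an `f` is scalar, hence central, and it is `0` or injective because its kernel is invariant. If
`f = 0` then `W = V × 0`; if `f` is injective then invariance of the graph under `(u, v)` reads
`f u = v f = f v`, which forces `u = v`.
-/

open Module.End (invtSubmodule)

section ProductSemiring

variable {R V₁ V₂ : Type*} [Semiring R] [AddCommMonoid V₁] [Module R V₁]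
  [AddCommMonoid V₂] [Module R V₂]

theorem comap_inr_mem_invtSubmodule {f : Module.End R V₁} {g : Module.End R V₂}
    {W : Submodule R (V₁ × V₂)} (hW : W ∈ invtSubmodule (f.prodMap g)) :
    W.comap (LinearMap.inr R V₁ V₂) ∈ invtSubmodule g := by
  intro y hy
  simpa using hW hy

theorem map_fst_mem_invtSubmodule {f : Module.End R V₁} {g : Module.End R V₂}
    {W : Submodule R (V₁ × V₂)} (hW : W ∈ invtSubmodule (f.prodMap g)) :
    W.map (LinearMap.fst R V₁ V₂) ∈ invtSubmodule f := by
  rintro _ ⟨p, hp, rfl⟩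
  exact ⟨_, hW hp, rfl⟩

theorem graph_mem_invtSubmodule_prodMap_iff {f : V₁ →ₗ[R] V₂} {u : Module.End R V₁}
    {v : Module.End R V₂} :
    f.graph ∈ invtSubmodule (u.prodMap v) ↔ f ∘ₗ u = v ∘ₗ f := by
  refine ⟨fun h ↦ LinearMap.ext fun x ↦ (h (show (x, f x) ∈ f.graph from rfl)).symm, ?_⟩
  rintro h ⟨x, y⟩ (rfl : y = f x)
  exact (LinearMap.congr_fun h x).symm

theorem graph_zero_eq_top_prod_bot :
    (0 : V₁ →ₗ[R] V₂).graph = (⊤ : Submodule R V₁).prod ⊥ := by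
  ext; simp

theorem disjoint_ker_fst_of_comap_inr_eq_bot {W : Submodule R (V₁ × V₂)}
    (hW : W.comap (LinearMap.inr R V₁ V₂) = ⊥) :
    Disjoint W (LinearMap.ker (LinearMap.fst R V₁ V₂)) := by
  rw [LinearMap.ker_fst, disjoint_comm, disjoint_iff, ← Submodule.map_comap_eq, hW,
    Submodule.map_bot]

end ProductSemiring

section ProductRing

variable {R V₁ V₂ : Type*} [Ring R] [AddCommGroup V₁] [Module R V₁] [AddCommGroup V₂] [Module R V₂]

theorem eq_map_fst_prod_top_of_comap_inr_eq_top {W : Submodule R (V₁ × V₂)}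
    (hW : W.comap (LinearMap.inr R V₁ V₂) = ⊤) :
    W = (W.map (LinearMap.fst R V₁ V₂)).prod ⊤ := by
  have hker : LinearMap.ker (LinearMap.fst R V₁ V₂) ≤ W := by
    rw [LinearMap.ker_fst, LinearMap.range_le_iff_comap, hW]
  conv_lhs => rw [← sup_of_le_left hker, ← Submodule.comap_map_eq]
  ext; simp

theorem exists_eq_graph_of_comap_inr_eq_bot_of_map_fst_eq_top {W : Submodule R (V₁ × V₂)}
    (hbot : W.comap (LinearMap.inr R V₁ V₂) = ⊥) (htop : W.map (LinearMap.fst R V₁ V₂) = ⊤) :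
    ∃ f : V₁ →ₗ[R] V₂, W = f.graph := by
  refine Submodule.exists_eq_graph ⟨?_, fun x ↦ ?_⟩
  · exact LinearMap.injective_domRestrict_iff.mpr (disjoint_ker_fst_of_comap_inr_eq_bot hbot)
  · obtain ⟨p, hp, hpx⟩ : x ∈ W.map (LinearMap.fst R V₁ V₂) := htop ▸ Submodule.mem_top
    exact ⟨⟨p, hp⟩, hpx⟩

end ProductRing

section Irreducible

variable {R V : Type*} [Ring R] [AddCommGroup V] [Module R V] {S : Set (Module.End R V)}

theorem eq_zero_or_injective_of_mem_centralizer
    (hirr : ∀ U : Submodule R V, (∀ g ∈ S, U ∈ invtSubmodule g) → U = ⊥ ∨ U = ⊤)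
    {f : Module.End R V} (hf : f ∈ S.centralizer) :
    f = 0 ∨ Function.Injective f := by
  have hker : ∀ g ∈ S, LinearMap.ker f ∈ invtSubmodule g := fun g hg x hx ↦ by
    have hcomm : g (f x) = f (g x) := LinearMap.congr_fun (hf g hg) x
    rw [Submodule.mem_comap, LinearMap.mem_ker, ← hcomm, LinearMap.mem_ker.mp hx, map_zero]
  exact (hirr _ hker).symm.imp LinearMap.ker_eq_top.mp LinearMap.ker_eq_bot.mp

theorem eq_bot_or_eq_top_or_eq_bot_prod_top_or_exists_eq_graph
    (hirr : ∀ U : Submodule R V, (∀ g ∈ S, U ∈ invtSubmodule g) → U = ⊥ ∨ U = ⊤)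
    {W : Submodule R (V × V)} (hW : ∀ g ∈ S, W ∈ invtSubmodule (g.prodMap g)) :
    W = ⊥ ∨ W = ⊤ ∨ W = (⊥ : Submodule R V).prod ⊤ ∨
      ∃ f ∈ S.centralizer, W = LinearMap.graph f := by
  have hfst := hirr (W.map (LinearMap.fst R V V)) fun g hg ↦ map_fst_mem_invtSubmodule (hW g hg)
  rcases hirr (W.comap (LinearMap.inr R V V)) fun g hg ↦ comap_inr_mem_invtSubmodule (hW g hg)
    with hinr | hinr
  · rcases hfst with hfst | hfst
    · left
      exact (disjoint_ker_fst_of_comap_inr_eq_bot hinr).eq_bot_of_le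
        (LinearMap.le_ker_iff_map.mpr hfst)
    · obtain ⟨f, rfl⟩ := exists_eq_graph_of_comap_inr_eq_bot_of_map_fst_eq_top hinr hfst
      exact .inr <| .inr <| .inr
        ⟨f, fun g hg ↦ (graph_mem_invtSubmodule_prodMap_iff.mp (hW g hg)).symm, rfl⟩
  · have hprod := eq_map_fst_prod_top_of_comap_inr_eq_top hinr
    rcases hfst with hfst | hfst <;> rw [hfst] at hprod
    · exact .inr <| .inr <| .inl hprod
    · exact .inr <| .inl <| hprod.trans Submodule.prod_top

theorem invariant_planes_of_overgroup_of_diagonal_general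
    (hirr : ∀ U : Submodule R V, (∀ g ∈ S, U ∈ invtSubmodule g) → U = ⊥ ∨ U = ⊤)
    (hcent : S.centralizer ⊆ Set.center (Module.End R V))
    {T : Set (Module.End R V × Module.End R V)} (hdiag : ∀ g ∈ S, (g, g) ∈ T)
    (hne : ∃ m ∈ T, m.1 ≠ m.2)
    {W : Submodule R (V × V)} (hbot : W ≠ ⊥) (htop : W ≠ ⊤)
    (hinv : ∀ m ∈ T, W ∈ invtSubmodule (m.1.prodMap m.2)) :
    W = (⊤ : Submodule R V).prod ⊥ ∨ W = (⊥ : Submodule R V).prod ⊤ := by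
  rcases eq_bot_or_eq_top_or_eq_bot_prod_top_or_exists_eq_graph hirr
    fun g hg ↦ hinv (g, g) (hdiag g hg) with h | h | h | ⟨f, hf, rfl⟩
  · exact absurd h hbot
  · exact absurd h htop
  · exact .inr h
  rcases eq_zero_or_injective_of_mem_centralizer hirr hf with rfl | hf_inj
  · exact .inl graph_zero_eq_top_prod_bot
  · obtain ⟨⟨u, v⟩, hm, huv⟩ := hne
    have hgraph : f ∘ₗ u = v ∘ₗ f := graph_mem_invtSubmodule_prodMap_iff.mp (hinv (u, v) hm)
    have hcomm : f ∘ₗ v = v ∘ₗ f := (Set.mem_center_iff.mp (hcent hf)).comm v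
    exact absurd ((LinearMap.cancel_left hf_inj).mp (hgraph.trans hcomm.symm)) huv

end Irreducible

theorem invariant_planes_of_overgroup_of_diagonal
    (Γ : Subgroup (Matrix.GeneralLinearGroup (Fin 2) ℚ))
    (hirr : ∀ W : Submodule ℚ (Fin 2 → ℚ),
      (∀ g ∈ Γ, ∀ x ∈ W, (g : Matrix (Fin 2) (Fin 2) ℚ).mulVec x ∈ W) → W = ⊥ ∨ W = ⊤)
    (hcent : ∀ f : (Fin 2 → ℚ) →ₗ[ℚ] (Fin 2 → ℚ),
      (∀ g ∈ Γ, ∀ x : Fin 2 → ℚ,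
        f ((g : Matrix (Fin 2) (Fin 2) ℚ).mulVec x) =
          (g : Matrix (Fin 2) (Fin 2) ℚ).mulVec (f x)) →
      ∃ c : ℚ, f = c • LinearMap.id)
    (M : Subgroup (Matrix.GeneralLinearGroup (Fin 2) ℚ × Matrix.GeneralLinearGroup (Fin 2) ℚ))
    (hdiag : ∀ g ∈ Γ, (g, g) ∈ M)
    (hne : ∃ m ∈ M, m.1 ≠ m.2)
    (W : Submodule ℚ ((Fin 2 → ℚ) × (Fin 2 → ℚ)))
    (hrank : Module.rank ℚ W = 2)
    (hinv : ∀ m ∈ M, ∀ p ∈ W,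
      ((m.1 : Matrix (Fin 2) (Fin 2) ℚ).mulVec p.1,
        (m.2 : Matrix (Fin 2) (Fin 2) ℚ).mulVec p.2) ∈ W) :
    W = H0 ∨ W = Hinf := by
  have hfinrank : Module.finrank ℚ W = 2 := Module.finrank_eq_of_rank_eq hrank
  let φ : Matrix.GeneralLinearGroup (Fin 2) ℚ → Module.End ℚ (Fin 2 → ℚ) :=
    fun g ↦ Matrix.toLin' g.val
  have hφ : Function.Injective φ := Matrix.toLin'.injective.comp Units.val_injective
  have hcenter : (φ '' Γ).centralizer ⊆ Set.center (Module.End ℚ (Fin 2 → ℚ)) := fun f hf ↦ by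
    obtain ⟨c, rfl⟩ := hcent f fun g hg x ↦
      (LinearMap.congr_fun (hf _ (Set.mem_image_of_mem φ hg)) x).symm
    exact Set.algebraMap_mem_center c
  obtain ⟨m, hm, hm_ne⟩ := hne
  exact invariant_planes_of_overgroup_of_diagonal_general (S := φ '' Γ) (T := Prod.map φ φ '' M)
    (fun U hU ↦ hirr U (Set.forall_mem_image.mp hU)) hcenter
    (Set.forall_mem_image.mpr fun g hg ↦ Set.mem_image_of_mem (Prod.map φ φ) (hdiag g hg))
    ⟨_, Set.mem_image_of_mem _ hm, hφ.ne hm_ne⟩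
    (by rintro rfl; simp at hfinrank) (by rintro rfl; simp at hfinrank)
    (Set.forall_mem_image.mpr hinv)
end

section
/- The group homomorphism from F₂ = FreeGroup (Fin 2) to GL(2,ℤ) sending the first generator to S = [[1,2],[0,1]] and the second generator to T = [[1,0],[2,1]] is injective; that is, S and T generate a free subgroup of rank 2 of GL(2,ℤ). -/
/-!
Play ping-pong with the two shears `v ↦ v + a vⱼ eᵢ` and `v ↦ v + b vᵢ eⱼ`, where `|ab| ≥ 4`, on the
cones `|a| |vⱼ| < 2 |vᵢ|` and `2 |vᵢ| < |a| |vⱼ|`. A nontrivial power of a shear is a shear with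
parameter at least as large in absolute value, and the reverse triangle inequality shows that it
carries the cone of the other shear into its own. No word in the two shears can then act trivially.
-/

/-- The matrix `S = [[1,2],[0,1]]` as an element of `GL(2,ℤ)`. -/
def Sgl : Matrix.GeneralLinearGroup (Fin 2) ℤ :=
  ⟨!![1, 2; 0, 1], !![1, -2; 0, 1],
    by norm_num [Matrix.mul_fin_two, ← Matrix.one_fin_two],
    by norm_num [Matrix.mul_fin_two, ← Matrix.one_fin_two]⟩

/-- The matrix `T = [[1,0],[2,1]]` as an element of `GL(2,ℤ)`. -/
def Tgl : Matrix.GeneralLinearGroup (Fin 2) ℤ :=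
  ⟨!![1, 0; 2, 1], !![1, 0; -2, 1],
    by norm_num [Matrix.mul_fin_two, ← Matrix.one_fin_two],
    by norm_num [Matrix.mul_fin_two, ← Matrix.one_fin_two]⟩

open Function Matrix Matrix.SpecialLinearGroup
open scoped Function Pointwise

section PingPong

variable {ι G α : Type*} [Nontrivial ι] [Group G] [MulAction G α]

theorem freeGroup_lift_injective_of_zpow_ping_pong (g : ι → G) (X : ι → Set α)
    (hX : ∀ i, (X i).Nonempty) (hdisj : Pairwise (Disjoint on X))
    (hpp : Pairwise fun i j ↦ ∀ m : ℤ, m ≠ 0 → g i ^ m • X j ⊆ X i) :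
    Injective (FreeGroup.lift g) := by
  let f : ι → FreeGroup Unit →* G := fun i ↦ FreeGroup.lift fun _ ↦ g i
  have lift_eq : FreeGroup.lift g =
      (Monoid.CoprodI.lift f).comp freeGroupEquivCoprodI.toMonoidHom := by
    ext i
    simp [f]
  have hf : Pairwise fun i j ↦ ∀ h : FreeGroup Unit, h ≠ 1 → f i h • X j ⊆ X i := by
    intro i j hij h hh
    obtain ⟨m, rfl⟩ := FreeGroup.freeGroupUnitEquivInt.symm.surjective h
    have hm : m ≠ 0 := by
      rintro rfl
      exact hh (zpow_zero _)
    have hfm : f i (FreeGroup.of () ^ m) = g i ^ m := by simp [f]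
    exact hfm ▸ hpp hij m hm
  have three_le_card : 3 ≤ Cardinal.mk (FreeGroup Unit) := by
    rw [FreeGroup.freeGroupUnitEquivInt.cardinal_eq, Cardinal.mk_denumerable]
    exact Cardinal.natCast_le_aleph0
  rw [lift_eq, MonoidHom.coe_comp]
  exact (Monoid.CoprodI.lift_injective_of_ping_pong f
    (.inr ⟨Classical.arbitrary ι, three_le_card⟩) X hX hdisj hf).comp
      freeGroupEquivCoprodI.injective

end PingPong

section Transvection

variable {n R : Type*} [Fintype n] [DecidableEq n] [CommRing R] {i j : n}

theorem transvection_zpow (hij : i ≠ j) (c : R) (m : ℤ) :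
    transvection hij c ^ m = transvection hij (m * c) := by
  let χ : AddChar R (SpecialLinearGroup n R) :=
    ⟨transvection hij, transvection_coeff_zero hij, transvection_add hij⟩
  rw [← zsmul_eq_mul]
  exact (χ.map_zsmul_eq_zpow m c).symm

theorem transvection_smul (hij : i ≠ j) (c : R) (v : n → R) :
    transvection hij c • v = v + (c * v j) • Pi.single i 1 := by
  simp [Matrix.SpecialLinearGroup.smul_def, transvection_coe, add_mulVec, single_mulVec_eq]

end Transvection

section Cone

variable {n R : Type*} [CommRing R] [LinearOrder R]

/-- The double cone of vectors whose `j`-th coordinate dominates the `i`-th one, in the sense that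
`p * |v i| < q * |v j|`. The opposite cone is obtained by exchanging `i` with `j` and `p` with
`q`; these pairs are the ping-pong tables for two opposite transvections. -/
def coordCone (i j : n) (p q : R) : Set (n → R) :=
  {v | p * |v i| < q * |v j|}

variable {i j : n} {p q : R}

theorem disjoint_coordCone_swap : Disjoint (coordCone i j p q) (coordCone j i q p) :=
  Set.disjoint_left.2 fun _ ↦ lt_asymm

variable [IsStrictOrderedRing R]

theorem coordCone_nonempty (hij : i ≠ j) (hq : 0 < q) : (coordCone i j p q).Nonempty := by
  classical exact ⟨Pi.single j 1, by simp [coordCone, hij, hq]⟩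

variable [Fintype n] [DecidableEq n]

theorem transvection_smul_coordCone_subset (hij : i ≠ j) {c : R} (hp : 0 ≤ p)
    (hc : 2 * q ≤ p * |c|) :
    transvection hij c • coordCone i j p q ⊆ coordCone j i q p := by
  rintro _ ⟨v, hv : p * |v i| < q * |v j|, rfl⟩
  have reverse_triangle : |c| * |v j| - |v i| ≤ |v i + c * v j| := by
    simpa [abs_mul, add_comm] using abs_sub_abs_le_abs_add (c * v j) (v i)
  suffices q * |v j| < p * |v i + c * v j| by
    simpa [coordCone, transvection_smul, hij.symm] using this
  calc
    q * |v j| = 2 * q * |v j| - q * |v j| := by ring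
    _ ≤ p * |c| * |v j| - q * |v j| := by gcongr
    _ < p * |c| * |v j| - p * |v i| := by gcongr
    _ = p * (|c| * |v j| - |v i|) := by ring
    _ ≤ p * |v i + c * v j| := by gcongr

theorem transvection_zpow_smul_coordCone_subset (hij : i ≠ j) {c : R} (hp : 0 ≤ p)
    (hc : 2 * q ≤ p * |c|) {m : ℤ} (hm : m ≠ 0) :
    transvection hij c ^ m • coordCone i j p q ⊆ coordCone j i q p := by
  have one_le_abs_m : (1 : R) ≤ |(m : R)| := mod_cast Int.one_le_abs hm
  rw [transvection_zpow]
  refine transvection_smul_coordCone_subset hij hp (hc.trans ?_)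
  rw [abs_mul]
  gcongr
  exact le_mul_of_one_le_left (abs_nonneg c) one_le_abs_m

end Cone

theorem lift_S_T_injective_general {n R : Type*} [Fintype n] [DecidableEq n] [CommRing R]
    [LinearOrder R] [IsStrictOrderedRing R] {i j : n} (hij : i ≠ j) {a b : R}
    (hab : 4 ≤ |a * b|) :
    Injective (FreeGroup.lift ![transvection hij a, transvection hij.symm b]) := by
  have abs_a_pos : 0 < |a| := abs_pos.2 fun ha ↦ by norm_num [ha] at hab
  have four_le : 2 * 2 ≤ |a| * |b| := by rw [← abs_mul]; linarith
  refine freeGroup_lift_injective_of_zpow_ping_pong _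
    ![coordCone j i |a| 2, coordCone i j 2 |a|] ?nonempty ?disjoint ?pingPong
  case nonempty =>
    exact Fin.forall_fin_two.2
      ⟨coordCone_nonempty hij.symm two_pos, coordCone_nonempty hij abs_a_pos⟩
  case disjoint =>
    intro k l hkl
    fin_cases k <;> fin_cases l <;> first | exact absurd rfl hkl | exact disjoint_coordCone_swap
  case pingPong =>
    intro k l hkl m hm
    fin_cases k <;> fin_cases l
    · exact absurd rfl hkl
    · exact transvection_zpow_smul_coordCone_subset hij zero_le_two le_rfl hm
    · exact transvection_zpow_smul_coordCone_subset hij.symm (abs_nonneg a) four_le hm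
    · exact absurd rfl hkl

theorem lift_Sgl_Tgl_eq_toGL_comp :
    FreeGroup.lift ![Sgl, Tgl] = toGL.comp
      (FreeGroup.lift ![transvection Fin.zero_ne_one 2, transvection Fin.zero_ne_one.symm 2]) := by
  ext k r s
  fin_cases k <;> fin_cases r <;> fin_cases s <;>
    simp [Sgl, Tgl, transvection_coe]

theorem lift_S_T_injective :
    Function.Injective
      (FreeGroup.lift ![Sgl, Tgl] :
        FreeGroup (Fin 2) →* Matrix.GeneralLinearGroup (Fin 2) ℤ) := by
  rw [lift_Sgl_Tgl_eq_toGL_comp, MonoidHom.coe_comp]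
  exact toGL_injective.comp (lift_S_T_injective_general _ (by norm_num))
end

section
/- The subgroup of GL(2,ℤ) generated by the two matrices S = [[1,2],[0,1]] and T = [[1,0],[2,1]] has finite index in GL(2,ℤ). -/
/-!
The idea is Sanov's theorem: `S` and `T` generate the group of all `[[a, b], [c, d]]` in `GL(2, ℤ)`
with `a ≡ d ≡ 1` mod `4` and `b`, `c` even, which contains the kernel of reduction mod `4`. Given
such a matrix, multiplying by a power of `S` adds an arbitrary even multiple of `c` to `a`, and
multiplying by a power of `T` adds an arbitrary even multiple of `a` to `c`. Since `a` and `c` have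
opposite parity, the Euclidean algorithm with even quotients brings `c` down to `0`; what remains is
unipotent because its diagonal entries are units congruent to `1` mod `4`, and so it is a power
of `S`.
-/

open Matrix Matrix.GeneralLinearGroup
open scoped MatrixGroups

section Unipotent

variable {R : Type*} [Ring R]

/-- The lower unitriangular matrix `[[1, 0], [x, 1]]` as a function of `x`, the counterpart of
`Matrix.GeneralLinearGroup.upperRightHom`. -/
def lowerLeftHom : AddChar R (GL (Fin 2) R) where
  toFun x := ⟨!![1, 0; x, 1], !![1, 0; -x, 1], by simp [one_fin_two], by simp [one_fin_two]⟩
  map_zero_eq_one' := by simp [Units.ext_iff, one_fin_two]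
  map_add_eq_mul' a b := by simp [Units.ext_iff, add_comm]

lemma coe_lowerLeftHom (x : R) : (lowerLeftHom x : Matrix (Fin 2) (Fin 2) R) = !![1, 0; x, 1] :=
  rfl

lemma coe_upperRightHom_mul (x : R) (g : GL (Fin 2) R) :
    (↑(upperRightHom x * g) : Matrix (Fin 2) (Fin 2) R) =
      !![g 0 0 + x * g 1 0, g 0 1 + x * g 1 1; g 1 0, g 1 1] := by
  rw [Units.val_mul, eta_fin_two (g : Matrix _ _ R)]
  simp

lemma coe_lowerLeftHom_mul (x : R) (g : GL (Fin 2) R) :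
    (↑(lowerLeftHom x * g) : Matrix (Fin 2) (Fin 2) R) =
      !![g 0 0, g 0 1; g 1 0 + x * g 0 0, g 1 1 + x * g 0 1] := by
  rw [Units.val_mul, eta_fin_two (g : Matrix _ _ R), coe_lowerLeftHom]
  simp [add_comm]

end Unipotent

lemma Sgl_zpow (k : ℤ) : Sgl ^ k = upperRightHom (2 * k) := by
  rw [mul_comm, ← smul_eq_mul, AddChar.map_zsmul_eq_zpow]
  rfl

lemma Tgl_zpow (k : ℤ) : Tgl ^ k = lowerLeftHom (2 * k) := by
  rw [mul_comm, ← smul_eq_mul, AddChar.map_zsmul_eq_zpow]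
  rfl

lemma upperRightHom_mem_closure {x : ℤ} (hx : Even x) :
    upperRightHom x ∈ Subgroup.closure {Sgl, Tgl} := by
  obtain ⟨k, rfl⟩ := hx.two_dvd
  rw [← Sgl_zpow]
  exact zpow_mem (Subgroup.subset_closure (by simp)) k

lemma lowerLeftHom_mem_closure {x : ℤ} (hx : Even x) :
    lowerLeftHom x ∈ Subgroup.closure {Sgl, Tgl} := by
  obtain ⟨k, rfl⟩ := hx.two_dvd
  rw [← Tgl_zpow]
  exact zpow_mem (Subgroup.subset_closure (by simp)) k

lemma exists_even_natAbs_add_mul_lt {x y : ℤ} (hy : y ≠ 0) (hxy : Odd (x + y)) :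
    ∃ q, Even q ∧ (x + q * y).natAbs < y.natAbs := by
  -- The balanced remainder of `x` modulo `2y` has absolute value at most `|y|`, and parity excludes
  -- equality.
  obtain ⟨k, hk⟩ : 2 * y ∣ x.bmod (2 * y.natAbs) - x := by
    rw [← Int.natAbs_dvd, Int.natAbs_mul]
    exact Int.dvd_bmod_sub_self
  have hlower := Int.le_bmod (x := x) (m := 2 * y.natAbs) (by lia)
  have hupper := Int.bmod_lt (x := x) (m := 2 * y.natAbs) (by lia)
  have hr : x + 2 * k * y = x.bmod (2 * y.natAbs) := by linear_combination -hk
  rw [← hr] at hlower hupper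
  have hne : (x + 2 * k * y).natAbs ≠ y.natAbs := fun h => by
    have hodd : Odd (x + 2 * k * y + y) := by
      convert hxy.add_even (even_two_mul (k * y)) using 1
      ring
    grind
  exact ⟨2 * k, even_two_mul k, by lia⟩

lemma exists_mem_closure_natAbs_mul_apply_one_zero_lt {g : GL (Fin 2) ℤ} (ha : Odd (g 0 0))
    (hc : Even (g 1 0)) (hc0 : g 1 0 ≠ 0) :
    ∃ u ∈ Subgroup.closure {Sgl, Tgl}, Odd ((u * g) 0 0) ∧ Even ((u * g) 1 0) ∧
      ((u * g) 1 0).natAbs < (g 1 0).natAbs := by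
  obtain ⟨p, hp, hlt⟩ := exists_even_natAbs_add_mul_lt hc0 (ha.add_even hc)
  set a := g 0 0 + p * g 1 0
  have ha' : Odd a := ha.add_even (hp.mul_right _)
  have ha0 : a ≠ 0 := fun h => by simp [h] at ha'
  obtain ⟨q, hq, hlt'⟩ := exists_even_natAbs_add_mul_lt ha0 (hc.add_odd ha')
  have h00 : (lowerLeftHom q * upperRightHom p * g) 0 0 = a := by
    rw [mul_assoc, coe_lowerLeftHom_mul, coe_upperRightHom_mul]
    rfl
  have h10 : (lowerLeftHom q * upperRightHom p * g) 1 0 = g 1 0 + q * a := by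
    rw [mul_assoc, coe_lowerLeftHom_mul, coe_upperRightHom_mul]
    rfl
  refine ⟨lowerLeftHom q * upperRightHom p,
    mul_mem (lowerLeftHom_mem_closure hq) (upperRightHom_mem_closure hp), ?_⟩
  rw [h00, h10]
  exact ⟨ha', hc.add (hq.mul_right a), hlt'.trans hlt⟩

lemma exists_mem_closure_mul_apply_one_zero_eq_zero (g : GL (Fin 2) ℤ) (ha : Odd (g 0 0))
    (hc : Even (g 1 0)) : ∃ h ∈ Subgroup.closure {Sgl, Tgl}, (h * g) 1 0 = 0 := by
  induction hn : (g 1 0).natAbs using Nat.strong_induction_on generalizing g with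
  | _ n ih =>
    by_cases hc0 : g 1 0 = 0
    · exact ⟨1, one_mem _, by simpa using hc0⟩
    obtain ⟨u, hu, ha', hc', hlt⟩ := exists_mem_closure_natAbs_mul_apply_one_zero_lt ha hc hc0
    obtain ⟨h, hh, hhg⟩ := ih _ (hlt.trans_eq hn) (u * g) ha' hc' rfl
    exact ⟨h * u, mul_mem hh hu, by rwa [mul_assoc]⟩

lemma det_eq_one_of_modEq {g : GL (Fin 2) ℤ} (ha : g 0 0 ≡ 1 [ZMOD 4]) (hd : g 1 1 ≡ 1 [ZMOD 4])
    (hb : Even (g 0 1)) (hc : Even (g 1 0)) : g.1.det = 1 := by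
  have hbc : g 0 1 * g 1 0 ≡ 0 [ZMOD 4] :=
    Int.modEq_zero_iff_dvd.2 (mul_dvd_mul hb.two_dvd hc.two_dvd)
  have hdet : g.1.det ≡ 1 [ZMOD 4] := by
    rw [det_fin_two]
    exact (ha.mul hd).sub hbc
  obtain h | h := Int.isUnit_iff.1 ((isUnit_iff_isUnit_det _).1 g.isUnit)
  · exact h
  · exact absurd (h ▸ hdet) (by decide)

/-- The Sanov subgroup of `GL(2, ℤ)`: matrices `[[a, b], [c, d]]` with `a ≡ d ≡ 1` mod `4` and
`b`, `c` even. Their determinant is automatically `1`, see `det_eq_one_of_modEq`. -/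
def sanovSubgroup : Subgroup (GL (Fin 2) ℤ) where
  carrier := {g | (g 0 0 ≡ 1 [ZMOD 4] ∧ g 1 1 ≡ 1 [ZMOD 4]) ∧ Even (g 0 1) ∧ Even (g 1 0)}
  one_mem' := by simp [Int.ModEq.refl]
  mul_mem' := by
    rintro g h ⟨⟨ha, hd⟩, hb, hc⟩ ⟨⟨ha', hd'⟩, hb', hc'⟩
    have hbc : g 0 1 * h 1 0 ≡ 0 [ZMOD 4] :=
      Int.modEq_zero_iff_dvd.2 (mul_dvd_mul hb.two_dvd hc'.two_dvd)
    have hcb : g 1 0 * h 0 1 ≡ 0 [ZMOD 4] :=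
      Int.modEq_zero_iff_dvd.2 (mul_dvd_mul hc.two_dvd hb'.two_dvd)
    simp only [Set.mem_ofPred_eq, Units.val_mul, mul_apply, Fin.sum_univ_two]
    exact ⟨⟨(ha.mul ha').add hbc, hcb.add (hd.mul hd')⟩,
      (hb'.mul_left _).add (hb.mul_right _), (hc.mul_right _).add (hc'.mul_left _)⟩
  inv_mem' := by
    rintro g ⟨⟨ha, hd⟩, hb, hc⟩
    have hinv : (↑g⁻¹ : Matrix (Fin 2) (Fin 2) ℤ) = !![g 1 1, -g 0 1; -g 1 0, g 0 0] := by
      rw [coe_units_inv, inv_def, det_eq_one_of_modEq ha hd hb hc, adjugate_fin_two]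
      simp
    simpa [hinv] using And.intro (And.intro hd ha) (And.intro hb hc)

lemma closure_le_sanovSubgroup : Subgroup.closure {Sgl, Tgl} ≤ sanovSubgroup := by
  rw [Subgroup.closure_le]
  rintro g (rfl | rfl) <;> simp [sanovSubgroup, Sgl, Tgl, Int.ModEq.refl]

lemma eq_upperRightHom_of_mem_sanovSubgroup {g : GL (Fin 2) ℤ} (hg : g ∈ sanovSubgroup)
    (hc : g 1 0 = 0) : g = upperRightHom (g 0 1) := by
  obtain ⟨⟨ha, hd⟩, hb, hc'⟩ := hg
  have had : g 0 0 * g 1 1 = 1 := by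
    simpa [det_fin_two, hc] using det_eq_one_of_modEq ha hd hb hc'
  have ha1 : g 0 0 = 1 := by
    obtain h | h := Int.eq_one_or_neg_one_of_mul_eq_one had
    · exact h
    · exact absurd (h ▸ ha) (by decide)
  have hd1 : g 1 1 = 1 := by simpa [ha1] using had
  ext i j
  fin_cases i <;> fin_cases j <;> simp [ha1, hd1, hc]

theorem closure_eq_sanovSubgroup : Subgroup.closure {Sgl, Tgl} = sanovSubgroup := by
  refine closure_le_sanovSubgroup.antisymm fun g hg => ?_
  have ha : Odd (g 0 0) := Int.odd_iff.2 (hg.1.1.of_dvd (by norm_num))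
  obtain ⟨h, hh, hhg⟩ := exists_mem_closure_mul_apply_one_zero_eq_zero g ha hg.2.2
  have hmem : h * g ∈ sanovSubgroup := mul_mem (closure_le_sanovSubgroup hh) hg
  rw [← Subgroup.mul_mem_cancel_left _ hh, eq_upperRightHom_of_mem_sanovSubgroup hmem hhg]
  exact upperRightHom_mem_closure hmem.2.1

lemma ker_map_le_sanovSubgroup :
    (GeneralLinearGroup.map (n := Fin 2) (Int.castRingHom (ZMod 4))).ker ≤ sanovSubgroup := by
  intro g hg
  have hcast (i j : Fin 2) : (g i j : ZMod 4) = (1 : Matrix (Fin 2) (Fin 2) (ZMod 4)) i j := by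
    simpa using (GeneralLinearGroup.ext_iff _ _).1 (MonoidHom.mem_ker.1 hg) i j
  have hentry (i j : Fin 2) : g i j ≡ (1 : Matrix (Fin 2) (Fin 2) ℤ) i j [ZMOD 4] :=
    (ZMod.intCast_eq_intCast_iff _ _ 4).1 (by simp [hcast, one_apply])
  have heven {x : ℤ} (hx : x ≡ 0 [ZMOD 4]) : Even x := Int.even_iff.2 (hx.of_dvd (by norm_num))
  exact ⟨⟨hentry 0 0, hentry 1 1⟩, heven (hentry 0 1), heven (hentry 1 0)⟩

instance : sanovSubgroup.FiniteIndex :=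
  Subgroup.finiteIndex_of_le ker_map_le_sanovSubgroup

theorem closure_S_T_finiteIndex :
    (Subgroup.closure ({Sgl, Tgl} : Set (Matrix.GeneralLinearGroup (Fin 2) ℤ))).index ≠ 0 := by
  rw [closure_eq_sanovSubgroup]
  exact Subgroup.FiniteIndex.index_ne_zero
end
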